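/- arXiv:1801.04701 — 9 statements merged into one kernel-verified Lean document; each statement's English description precedes it below -/
import Mathlib

section
/- Fix a scoring function f, a finite set of m positive instances x_1^+,...,x_m^+ and n negative instances x_1^-,...,x_n^- (n ≥ 1), and a tolerance τ with 0 ≤ τ < 1. Let k = ⌊τn⌋ + 1 and let f(x_[k]^-) denote the k-th largest value among f(x_1^-),...,f(x_n^-). Then the infimum, over all thresholds b ∈ ℝ satisfying (1/n)·Σ_{j=1}^n 𝟙(f(x_j^-) > b) ≤ τ, of the empirical false-negative rate (1/m)·Σ_{i=1}^m 𝟙(f(x_i^+) ≤ b) is attained at b = f(x_[k]^-) and equals (1/m)·Σ_{i=1}^m 𝟙(f(x_i^+) − f(x_[k]^-) ≤ 0). Consequently, for any hypothesis set H of scoring functions, the constrained empirical problem min over f∈H and feasible b of (1/m)·Σ_{i=1}^m 𝟙(f(x_i^+) ≤ b) has the same optimal value as the ranking problem min over f∈H of (1/m)·Σ_{i=1}^m 𝟙(f(x_i^+) − f(x_[k]^-) ≤ 0). -/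
/-!
At most `⌊τ n⌋` negatives score above `b` exactly when the `(⌊τ n⌋ + 1)`-th largest negative score
is at most `b`, so the feasible thresholds of `g` form the half-line `[g(x_[k]^-), ∞)`. The
false-negative rate is monotone in the threshold, hence minimal at the left endpoint of this
half-line, where it is the ranking objective. Minimizing over the threshold first, for each scoring
function separately, turns the constrained problem over `H` into the ranking problem.
-/

/-- The `k`-th largest value among `v 1, ..., v n` (1-indexed `k`). -/
noncomputable def kthLargest {n : ℕ} (v : Fin n → ℝ) (k : ℕ) : ℝ :=
  ((List.ofFn v).insertionSort (· ≥ ·)).getD (k - 1) 0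

open Classical in
/-- Real-valued indicator of a proposition. -/
noncomputable def ind (P : Prop) : ℝ := if P then 1 else 0

open Finset

lemma countP_ofFn_eq_card_filter {β : Type*} {n : ℕ} (v : Fin n → β) (p : β → Prop)
    [DecidablePred p] : (List.ofFn v).countP (fun x => p x) = #{j | p (v j)} := by
  rw [List.ofFn_eq_map, List.countP_map, List.countP_eq_length_filter]
  rfl

lemma lt_getElem_insertionSort_ge_iff {β : Type*} [LinearOrder β] (l : List β) (b : β) {i : ℕ}
    (hi : i < (l.insertionSort (· ≥ ·)).length) :
    b < (l.insertionSort (· ≥ ·))[i] ↔ i < l.countP (fun x => b < x) := by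
  set s := l.insertionSort (· ≥ ·)
  have hanti : Antitone s.get := (List.sortedGE_insertionSort (l := l)).antitone_get
  have hcard : #{j | b < s.get j} = l.countP (fun x => b < x) := by
    rw [← countP_ofFn_eq_card_filter s.get (b < ·), List.ofFn_get,
      (List.perm_insertionSort (· ≥ ·) l).countP_eq]
  rw [← hcard]
  exact (Tuple.lt_card_gt_iff_apply_gt_of_antitone (j := ⟨i, hi⟩) hanti).symm

lemma kthLargest_succ_le_iff {n : ℕ} (v : Fin n → ℝ) (b : ℝ) {i : ℕ} (hi : i < n) :
    kthLargest v (i + 1) ≤ b ↔ #{j | b < v j} ≤ i := by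
  have hlen : i < ((List.ofFn v).insertionSort (· ≥ ·)).length := by simpa using hi
  rw [kthLargest, Nat.add_sub_cancel, List.getD_eq_getElem _ _ hlen, ← not_lt,
    lt_getElem_insertionSort_ge_iff, countP_ofFn_eq_card_filter v (b < ·), not_lt]

lemma sum_ind_eq_card_filter {ι : Type*} (s : Finset ι) (P : ι → Prop) [DecidablePred P] :
    ∑ i ∈ s, ind (P i) = #{i ∈ s | P i} := by
  simp only [ind, natCast_card_filter]
  congr!

lemma falsePositiveRate_le_iff_kthLargest_le {n : ℕ} (hn : 1 ≤ n) {τ : ℝ} (hτ0 : 0 ≤ τ)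
    (hτ1 : τ < 1) (v : Fin n → ℝ) (b : ℝ) :
    (1 / (n : ℝ)) * ∑ j, ind (b < v j) ≤ τ ↔ kthLargest v (⌊τ * (n : ℝ)⌋.toNat + 1) ≤ b := by
  have hn0 : (0 : ℝ) < n := by exact_mod_cast hn
  have hτn : 0 ≤ τ * (n : ℝ) := by positivity
  have hfloor : ⌊τ * (n : ℝ)⌋₊ < n := (Nat.floor_lt hτn).2 (mul_lt_of_lt_one_left hn0 hτ1)
  rw [Int.floor_toNat, kthLargest_succ_le_iff v b hfloor, Nat.le_floor_iff hτn,
    sum_ind_eq_card_filter, one_div_mul_eq_div, div_le_iff₀ hn0]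

lemma monotone_sum_ind_le {ι β : Type*} [Preorder β] (s : Finset ι) (x : ι → β) :
    Monotone fun b => ∑ i ∈ s, ind (x i ≤ b) := by
  classical
  intro b c hbc
  simp only [sum_ind_eq_card_filter]
  exact_mod_cast card_le_card (monotone_filter_right s fun i _ (hi : x i ≤ b) => hi.trans hbc)

lemma csInf_biUnion_eq_csInf_image_of_isLeast {ι β : Type*} [ConditionallyCompleteLinearOrder β]
    {H : Set ι} {S : ι → Set β} {r : ι → β} (h : ∀ g ∈ H, IsLeast (S g) (r g)) :
    sInf (⋃ g ∈ H, S g) = sInf (r '' H) := by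
  apply csInf_eq_csInf_of_forall_exists_le
  · intro v hv
    obtain ⟨g, hg, hgv⟩ := Set.mem_iUnion₂.1 hv
    exact ⟨r g, Set.mem_image_of_mem r hg, (h g hg).2 hgv⟩
  · rintro _ ⟨g, hg, rfl⟩
    exact ⟨r g, Set.mem_biUnion hg (h g hg).1, le_rfl⟩

/-- the constrained empirical problem and the ranking problem.
The infimum over feasible thresholds of the empirical false-negative rate is attained at
`b = f(x_[k]^-)` and equals the ranking objective; consequently for any hypothesis set `H`
the two problems have the same optimal value. -/
theorem tau_fpl_constrained_eq_ranking
    {α : Type*} (m n : ℕ) (hn : 1 ≤ n) (τ : ℝ) (hτ0 : 0 ≤ τ) (hτ1 : τ < 1)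
    (k : ℕ) (hk : k = (⌊τ * (n : ℝ)⌋).toNat + 1)
    (xp : Fin m → α) (xn : Fin n → α)
    (FNR : (α → ℝ) → ℝ → ℝ)
    (hFNR : ∀ g b, FNR g b = (1 / (m : ℝ)) * ∑ i, ind (g (xp i) ≤ b))
    (Feas : (α → ℝ) → ℝ → Prop)
    (hFeas : ∀ g b, Feas g b ↔ (1 / (n : ℝ)) * ∑ j, ind (b < g (xn j)) ≤ τ)
    (rank : (α → ℝ) → ℝ)
    (hrank : ∀ g, rank g =
      (1 / (m : ℝ)) * ∑ i, ind (g (xp i) - kthLargest (fun j => g (xn j)) k ≤ 0))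
    (f : α → ℝ) :
    (Feas f (kthLargest (fun j => f (xn j)) k) ∧
      FNR f (kthLargest (fun j => f (xn j)) k) = rank f ∧
      (∀ b : ℝ, Feas f b → rank f ≤ FNR f b)) ∧
    (∀ H : Set (α → ℝ),
      sInf {v : ℝ | ∃ g ∈ H, ∃ b : ℝ, Feas g b ∧ v = FNR g b} =
        sInf {v : ℝ | ∃ g ∈ H, v = rank g}) := by
  have hthreshold (g : α → ℝ) : IsLeast {b | Feas g b} (kthLargest (fun j => g (xn j)) k) := by
    simp only [hFeas, hk, falsePositiveRate_le_iff_kthLargest_le hn hτ0 hτ1]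
    exact isLeast_Ici
  have hattained (g : α → ℝ) : FNR g (kthLargest (fun j => g (xn j)) k) = rank g := by
    simp only [hFNR, hrank, sub_nonpos]
  have hmono (g : α → ℝ) : Monotone (FNR g) := by
    rw [funext (hFNR g)]
    exact (monotone_sum_ind_le univ _).const_mul (by positivity)
  have hleast (g : α → ℝ) : IsLeast (FNR g '' {b | Feas g b}) (rank g) :=
    hattained g ▸ (hmono g).map_isLeast (hthreshold g)
  refine ⟨⟨(hthreshold f).1, hattained f, fun b hb => (hleast f).2 ⟨b, hb, rfl⟩⟩, fun H => ?_⟩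
  calc sInf {v : ℝ | ∃ g ∈ H, ∃ b : ℝ, Feas g b ∧ v = FNR g b}
      = sInf (⋃ g ∈ H, FNR g '' {b | Feas g b}) := by congr 1; ext v; simp [eq_comm]
    _ = sInf (rank '' H) := csInf_biUnion_eq_csInf_image_of_isLeast fun g _ => hleast g
    _ = sInf {v : ℝ | ∃ g ∈ H, v = rank g} := by congr 1; ext v; simp [eq_comm]
end

section
/- Fix a scoring function f, m positive instances x_1^+,...,x_m^+, n negative instances x_1^-,...,x_n^- (n ≥ 1), a tolerance τ with 0 ≤ τ < 1, and set k = ⌊τn⌋ + 1. Let L be any surrogate function of 𝟙(u ≤ 0). Then (1/m)·Σ_{i=1}^m 𝟙( f(x_i^+) − f(x_[k]^-) ≤ 0 ) ≤ (1/m)·Σ_{i=1}^m L( f(x_i^+) − (1/k)·Σ_{j=1}^k f(x_[j]^-) ), where f(x_[j]^-) denotes the j-th largest value among f(x_1^-),...,f(x_n^-). -/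
theorem kthLargest_antitoneOn {n : ℕ} (v : Fin n → ℝ) :
    AntitoneOn (kthLargest v) (Set.Icc 1 n) := by
  intro i hi j hj hij
  have lt_length : ∀ l ∈ Set.Icc 1 n,
      l - 1 < ((List.ofFn v).insertionSort (· ≥ ·)).length := fun l hl => by
    rw [List.length_insertionSort, List.length_ofFn]
    exact Nat.sub_one_lt_of_le hl.1 hl.2
  unfold kthLargest
  rw [List.getD_eq_getElem _ _ (lt_length i hi), List.getD_eq_getElem _ _ (lt_length j hj)]
  exact List.sortedGE_insertionSort.getElem_ge_getElem_of_le (Nat.sub_le_sub_right hij 1)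

theorem kthLargest_le_mean {n k : ℕ} (v : Fin n → ℝ) (hk : 1 ≤ k) (hkn : k ≤ n) :
    kthLargest v k ≤ (1 / (k : ℝ)) * ∑ j ∈ Finset.range k, kthLargest v (j + 1) := by
  have hk_pos : (0 : ℝ) < k := Nat.cast_pos.mpr hk
  have le_of_mem : ∀ j ∈ Finset.range k, kthLargest v k ≤ kthLargest v (j + 1) := fun j hj =>
    have hjk : j + 1 ≤ k := Finset.mem_range.mp hj
    kthLargest_antitoneOn v ⟨Nat.le_add_left 1 j, hjk.trans hkn⟩ ⟨hk, hkn⟩ hjk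
  rw [one_div_mul_eq_div, le_div_iff₀' hk_pos]
  simpa only [Finset.card_range, nsmul_eq_mul] using Finset.card_nsmul_le_sum _ _ _ le_of_mem

theorem ind_mono {P Q : Prop} (h : P → Q) : ind P ≤ ind Q := by
  unfold ind
  split_ifs with hP hQ
  exacts [le_rfl, absurd (h hP) hQ, zero_le_one, le_rfl]

theorem ind_nonpos_le_of_one_le_of_nonneg {L : ℝ → ℝ} (one_le : ∀ u ≤ 0, 1 ≤ L u)
    (nonneg : ∀ u > 0, 0 ≤ L u) (u : ℝ) : ind (u ≤ 0) ≤ L u := by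
  unfold ind
  split_ifs with hu
  exacts [one_le u hu, nonneg u (not_le.mp hu)]

theorem toNat_floor_mul_natCast_lt {K : Type*} [Ring K] [LinearOrder K] [IsStrictOrderedRing K]
    [FloorRing K] {n : ℕ} (hn : 1 ≤ n) {τ : K} (hτ : τ < 1) : ⌊τ * (n : K)⌋.toNat < n := by
  rw [Int.floor_toNat, Nat.floor_lt' (Nat.one_le_iff_ne_zero.mp hn)]
  exact mul_lt_of_lt_one_left (Nat.cast_pos.mpr hn) hτ

theorem indicator_rank_risk_le_surrogate_mean_risk_general
    {α : Type*} {m n k : ℕ} (f : α → ℝ) (xp : Fin m → α) (xn : Fin n → α)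
    (hk : 1 ≤ k) (hkn : k ≤ n) {L : ℝ → ℝ} (hL : ∀ u, ind (u ≤ 0) ≤ L u) :
    (1 / (m : ℝ)) * ∑ i, ind (f (xp i) - kthLargest (fun j => f (xn j)) k ≤ 0) ≤
      (1 / (m : ℝ)) * ∑ i, L (f (xp i) -
        (1 / (k : ℝ)) * ∑ j ∈ Finset.range k, kthLargest (fun t => f (xn t)) (j + 1)) := by
  gcongr with i
  have hmean := kthLargest_le_mean (fun t => f (xn t)) hk hkn
  exact (ind_mono (sub_le_sub_left hmean (f (xp i))).trans).trans (hL _)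

/-- the 0-1 ranking risk w.r.t. the `k`-th largest negative score is upper
bounded by the surrogate risk w.r.t. the mean of the `k` largest negative scores. -/
theorem indicator_rank_risk_le_surrogate_mean_risk
    {α : Type*} (m n : ℕ) (hn : 1 ≤ n) (f : α → ℝ)
    (xp : Fin m → α) (xn : Fin n → α)
    (τ : ℝ) (hτ0 : 0 ≤ τ) (hτ1 : τ < 1)
    (k : ℕ) (hk : k = (⌊τ * (n : ℝ)⌋).toNat + 1)
    (L : ℝ → ℝ) (hL_cont : Continuous L) (hL_anti : Antitone L)
    (hL_nonpos : ∀ u ≤ 0, L 0 ≤ L u) (hL0 : 1 ≤ L 0)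
    (hL_pos : ∀ u > 0, 0 ≤ L u ∧ L u < L 0)
    (hL_lim : Filter.Tendsto L Filter.atTop (nhds 0)) :
    (1 / (m : ℝ)) * ∑ i, ind (f (xp i) - kthLargest (fun j => f (xn j)) k ≤ 0) ≤
      (1 / (m : ℝ)) * ∑ i, L (f (xp i) -
        (1 / (k : ℝ)) * ∑ j ∈ Finset.range k, kthLargest (fun t => f (xn t)) (j + 1)) :=
  indicator_rank_risk_le_surrogate_mean_risk_general f xp xn (hk ▸ Nat.le_add_left 1 _)
    (hk ▸ toNat_floor_mul_natCast_lt hn hτ1)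
    (ind_nonpos_le_of_one_le_of_nonneg (fun u hu => hL0.trans (hL_nonpos u hu))
      fun u hu => (hL_pos u hu).1)
end

section
/- Fix a scoring function f, m positive instances x_1^+,...,x_m^+, n negative instances x_1^-,...,x_n^- (n ≥ 1), a tolerance τ with 0 ≤ τ < 1, and set k = ⌊τn⌋ + 1. Let L be a convex surrogate function of 𝟙(u ≤ 0). Then for every b ∈ ℝ satisfying (1/n)·Σ_{j=1}^n L(b − f(x_j^-)) ≤ τ, it holds that (1/m)·Σ_{i=1}^m L( f(x_i^+) − (1/k)·Σ_{j=1}^k f(x_[j]^-) ) ≤ (1/m)·Σ_{i=1}^m L( f(x_i^+) − b ), where f(x_[j]^-) denotes the j-th largest value among f(x_1^-),...,f(x_n^-). -/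
open Finset

section KthLargest

variable {n : ℕ} {M : Type*} [AddCommMonoid M]

lemma sum_range_length_getD {α : Type*} (l : List α) (d : α) (g : α → M) :
    ∑ j ∈ range l.length, g (l.getD j d) = (l.map g).sum := by
  rw [sum_range, ← Fin.sum_univ_fun_getElem]
  exact sum_congr rfl fun j _ => by rw [List.getD_eq_getElem _ _ j.isLt]

lemma sum_range_kthLargest (v : Fin n → ℝ) (g : ℝ → M) :
    ∑ j ∈ range n, g (kthLargest v (j + 1)) = ∑ i, g (v i) := by
  have hperm := List.perm_insertionSort (· ≥ ·) (List.ofFn v)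
  have hlength : ((List.ofFn v).insertionSort (· ≥ ·)).length = n := by
    rw [hperm.length_eq, List.length_ofFn]
  calc ∑ j ∈ range n, g (kthLargest v (j + 1))
      = (((List.ofFn v).insertionSort (· ≥ ·)).map g).sum := by
        rw [← sum_range_length_getD _ 0, hlength]
        rfl
    _ = ((List.ofFn v).map g).sum := (hperm.map g).sum_eq
    _ = ∑ i, g (v i) := by rw [List.map_ofFn, List.sum_ofFn]; rfl

lemma sum_range_kthLargest_le [PartialOrder M] [IsOrderedAddMonoid M] (v : Fin n → ℝ)
    {g : ℝ → M} (hg : ∀ x, 0 ≤ g x) {k : ℕ} (hk : k ≤ n) :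
    ∑ j ∈ range k, g (kthLargest v (j + 1)) ≤ ∑ i, g (v i) :=
  calc ∑ j ∈ range k, g (kthLargest v (j + 1))
      ≤ ∑ j ∈ range n, g (kthLargest v (j + 1)) :=
        sum_le_sum_of_subset_of_nonneg (range_mono hk) fun _ _ _ => hg _
    _ = ∑ i, g (v i) := sum_range_kthLargest v g

end KthLargest

lemma lt_sum_smul_of_sum_smul_map_lt {𝕜 E β ι : Type*} [Field 𝕜] [LinearOrder 𝕜]
    [IsStrictOrderedRing 𝕜] [AddCommGroup E] [LinearOrder E] [Module 𝕜 E] [AddCommGroup β]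
    [PartialOrder β] [IsOrderedAddMonoid β] [Module 𝕜 β] [IsStrictOrderedModule 𝕜 β]
    {s : Set E} {L : E → β} (hconv : ConvexOn 𝕜 s L) (hanti : AntitoneOn L s)
    {t : Finset ι} {w : ι → 𝕜} {p : ι → E} (hw0 : ∀ i ∈ t, 0 ≤ w i) (hw1 : ∑ i ∈ t, w i = 1)
    (hp : ∀ i ∈ t, p i ∈ s) {a : E} (ha : a ∈ s) (h : ∑ i ∈ t, w i • L (p i) < L a) :
    a < ∑ i ∈ t, w i • p i :=
  hanti.reflect_lt (hconv.1.sum_mem hw0 hw1 hp) ha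
    ((hconv.map_sum_le hw0 hw1 hp).trans_lt h)

lemma mean_kthLargest_lt {L : ℝ → ℝ} (hconv : ConvexOn ℝ Set.univ L) (hanti : Antitone L)
    (hnonneg : ∀ u, 0 ≤ L u) {n k : ℕ} (hkn : k ≤ n) {v : Fin n → ℝ} {b : ℝ}
    (h : ∑ i, L (b - v i) < k * L 0) :
    1 / (k : ℝ) * ∑ j ∈ range k, kthLargest v (j + 1) < b := by
  have htop : ∑ j ∈ range k, L (b - kthLargest v (j + 1)) < k * L 0 :=
    (sum_range_kthLargest_le v (g := fun z => L (b - z)) (fun _ => hnonneg _) hkn).trans_lt h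
  have hk : (0 : ℝ) < k :=
    pos_of_mul_pos_left ((sum_nonneg fun _ _ => hnonneg _).trans_lt h) (hnonneg 0)
  have hweights : ∑ _j ∈ range k, 1 / (k : ℝ) = 1 := by simp [hk.ne']
  have hmean : ∑ j ∈ range k, 1 / (k : ℝ) * L (b - kthLargest v (j + 1)) < L 0 := by
    rwa [← mul_sum, one_div, inv_mul_lt_iff₀ hk]
  have hpos : 0 < ∑ j ∈ range k, 1 / (k : ℝ) * (b - kthLargest v (j + 1)) :=
    lt_sum_smul_of_sum_smul_map_lt hconv (hanti.antitoneOn _) (fun _ _ => by positivity)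
      hweights (fun _ _ => Set.mem_univ _) (Set.mem_univ _) hmean
  simpa only [mul_sub, sum_sub_distrib, ← sum_mul, hweights, one_mul, ← mul_sum, sub_pos] using hpos

lemma lt_toNat_floor_add_one {R : Type*} [Ring R] [LinearOrder R] [FloorRing R] (x : R) :
    x < (⌊x⌋.toNat + 1 : ℕ) := by
  rw [Int.floor_toNat]
  exact_mod_cast Nat.lt_floor_add_one x

lemma toNat_floor_add_one_le {R : Type*} [Ring R] [LinearOrder R] [IsStrictOrderedRing R]
    [FloorRing R] {n : ℕ} (hn : n ≠ 0) {x : R} (hx : x < n) : ⌊x⌋.toNat + 1 ≤ n := by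
  rw [Int.floor_toNat, Nat.add_one_le_iff]
  exact (Nat.floor_lt' hn).2 hx

theorem surrogate_mean_risk_le_constrained_surrogate_risk_general
    {α : Type*} (m n : ℕ) (f : α → ℝ) (xp : Fin m → α) (xn : Fin n → α) (τ : ℝ) (k : ℕ)
    (L : ℝ → ℝ) (hL_conv : ConvexOn ℝ Set.univ L) (hL_anti : Antitone L)
    (hL_nonneg : ∀ u, 0 ≤ L u) (hkn : k ≤ n) (hτk : τ * n < k * L 0)
    (b : ℝ) (hb : (1 / (n : ℝ)) * ∑ j, L (b - f (xn j)) ≤ τ) :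
    (1 / (m : ℝ)) * ∑ i, L (f (xp i) -
        (1 / (k : ℝ)) * ∑ j ∈ range k, kthLargest (fun t => f (xn t)) (j + 1)) ≤
      (1 / (m : ℝ)) * ∑ i, L (f (xp i) - b) := by
  have hsum : ∑ j, L (b - f (xn j)) < k * L 0 := by
    rcases n.eq_zero_or_pos with rfl | hn
    · simpa using hτk
    · rw [one_div, inv_mul_le_iff₀ (by exact_mod_cast hn), mul_comm] at hb
      exact hb.trans_lt hτk
  have hmean := mean_kthLargest_lt hL_conv hL_anti hL_nonneg hkn hsum
  gcongr with i
  exact hL_anti (sub_le_sub_left hmean.le _)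

/-- `R̄₁ ≤ R̄₂` — the surrogate risk w.r.t. the mean of the top-`k` negative
scores lower bounds the surrogate risk at any threshold `b` feasible for the surrogate
false-positive constraint. -/
theorem surrogate_mean_risk_le_constrained_surrogate_risk
    {α : Type*} (m n : ℕ) (hn : 1 ≤ n) (f : α → ℝ)
    (xp : Fin m → α) (xn : Fin n → α)
    (τ : ℝ) (hτ0 : 0 ≤ τ) (hτ1 : τ < 1)
    (k : ℕ) (hk : k = (⌊τ * (n : ℝ)⌋).toNat + 1)
    (L : ℝ → ℝ) (hL_conv : ConvexOn ℝ Set.univ L)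
    (hL_cont : Continuous L) (hL_anti : Antitone L)
    (hL_nonpos : ∀ u ≤ 0, L 0 ≤ L u) (hL0 : 1 ≤ L 0)
    (hL_pos : ∀ u > 0, 0 ≤ L u ∧ L u < L 0)
    (hL_lim : Filter.Tendsto L Filter.atTop (nhds 0))
    (b : ℝ) (hb : (1 / (n : ℝ)) * ∑ j, L (b - f (xn j)) ≤ τ) :
    (1 / (m : ℝ)) * ∑ i, L (f (xp i) -
        (1 / (k : ℝ)) * ∑ j ∈ Finset.range k, kthLargest (fun t => f (xn t)) (j + 1)) ≤
      (1 / (m : ℝ)) * ∑ i, L (f (xp i) - b) := by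
  subst hk
  have hτn : τ * n < n := mul_lt_of_lt_one_left (by exact_mod_cast hn) hτ1
  exact surrogate_mean_risk_le_constrained_surrogate_risk_general m n f xp xn τ _ L hL_conv hL_anti
    (hL_anti.le_of_tendsto hL_lim) (toNat_floor_add_one_le (by lia) hτn)
    ((lt_toNat_floor_add_one _).trans_le (le_mul_of_one_le_right (Nat.cast_nonneg _) hL0)) b hb
end

section
/- Let L be a convex surrogate function of 𝟙(u ≤ 0), let v_1,...,v_n be real numbers (n ≥ 1), let τ satisfy 0 ≤ τ < 1, and set k = ⌊τn⌋ + 1. If b ∈ ℝ satisfies Σ_{j=1}^n L(b − v_j) ≤ τn, then b > (1/k)·Σ_{j=1}^k v_[j], where v_[j] denotes the j-th largest value among v_1,...,v_n. -/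
/-!
Suppose `b` is at most the mean of the `k` largest values. By Jensen's inequality the average of
`L (b - v_[j])` over `j ≤ k` is at least `L (b - mean) ≥ 1`, so these `k` terms sum to at least `k`.
The remaining terms of `∑ j, L (b - v j)` are nonnegative, so the whole sum is at least
`k = ⌊τn⌋ + 1 > τn`.
-/

open Finset

section Jensen

variable {𝕜 E β ι : Type*} [Field 𝕜] [LinearOrder 𝕜] [IsStrictOrderedRing 𝕜]

lemma card_smul_map_mean_le_sum [AddCommGroup E] [Module 𝕜 E]
    [AddCommGroup β] [PartialOrder β] [IsOrderedAddMonoid β] [Module 𝕜 β]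
    [IsStrictOrderedModule 𝕜 β] {D : Set E} {f : E → β} (hf : ConvexOn 𝕜 D f)
    {s : Finset ι} {p : ι → E} (hp : ∀ i ∈ s, p i ∈ D) :
    (#s : 𝕜) • f ((#s : 𝕜)⁻¹ • ∑ i ∈ s, p i) ≤ ∑ i ∈ s, f (p i) := by
  rcases s.eq_empty_or_nonempty with rfl | hs
  · simp
  have hcard : 0 < (#s : 𝕜) := by exact_mod_cast hs.card_pos
  have jensen := hf.map_centerMass_le (w := fun _ => (1 : 𝕜)) (fun _ _ => zero_le_one)
    (by simpa using hs) hp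
  simp only [centerMass, sum_const, nsmul_eq_mul, mul_one, one_smul] at jensen
  rwa [le_inv_smul_iff_of_pos hcard] at jensen

lemma mean_lt_of_sum_lt_card_mul {f : 𝕜 → 𝕜} (hf : ConvexOn 𝕜 Set.univ f) {c : 𝕜}
    (hc : ∀ u ≤ 0, c ≤ f u) {s : Finset ι} {z : ι → 𝕜} {b : 𝕜}
    (hsum : ∑ i ∈ s, f (b - z i) < #s * c) :
    1 / (#s : 𝕜) * ∑ i ∈ s, z i < b := by
  have hcard : (#s : 𝕜) ≠ 0 := by
    intro h
    obtain rfl : s = ∅ := by simpa using h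
    simp at hsum
  by_contra! hb
  have hmean : (#s : 𝕜)⁻¹ • ∑ i ∈ s, (b - z i) = b - 1 / (#s : 𝕜) * ∑ i ∈ s, z i := by
    simp only [sum_sub_distrib, sum_const, nsmul_eq_mul, smul_eq_mul]
    field_simp
  refine hsum.not_ge ?_
  calc (#s : 𝕜) * c
      ≤ #s * f ((#s : 𝕜)⁻¹ • ∑ i ∈ s, (b - z i)) := by
        gcongr
        exact hc _ (hmean ▸ sub_nonpos.mpr hb)
    _ ≤ ∑ i ∈ s, f (b - z i) := card_smul_map_mean_le_sum hf fun _ _ => Set.mem_univ _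

end Jensen

section KthLargest

variable {n : ℕ} {M : Type*} [AddCommMonoid M]

lemma sum_range_comp_kthLargest (v : Fin n → ℝ) (f : ℝ → M) :
    ∑ j ∈ range n, f (kthLargest v (j + 1)) = ∑ j, f (v j) := by
  set l := (List.ofFn v).insertionSort (· ≥ ·) with hl
  have hlen : l.length = n := by simp [hl]
  have hperm : l.Perm (List.ofFn v) := List.perm_insertionSort _ _
  calc ∑ j ∈ range n, f (kthLargest v (j + 1))
      = ∑ j ∈ range l.length, f (l.getD j 0) := by rw [hlen]; rfl
    _ = ∑ i : Fin l.length, f l[i] := by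
        rw [sum_range]
        exact sum_congr rfl fun i _ => by rw [List.getD_eq_getElem _ _ i.isLt, Fin.getElem_fin]
    _ = (l.map f).sum := Fin.sum_univ_fun_getElem l f
    _ = ((List.ofFn v).map f).sum := (hperm.map f).sum_eq
    _ = ∑ j, f (v j) := by rw [List.map_ofFn, List.sum_ofFn]; rfl

lemma sum_range_comp_kthLargest_le [PartialOrder M] [IsOrderedAddMonoid M] (v : Fin n → ℝ)
    {f : ℝ → M} (hf : ∀ x, 0 ≤ f x) {k : ℕ} (hkn : k ≤ n) :
    ∑ j ∈ range k, f (kthLargest v (j + 1)) ≤ ∑ j, f (v j) := by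
  rw [← sum_range_comp_kthLargest]
  exact sum_le_sum_of_subset_of_nonneg (range_mono hkn) fun _ _ _ => hf _

end KthLargest

theorem feasible_threshold_gt_topk_mean_general {n k : ℕ} (hkn : k ≤ n) (v : Fin n → ℝ)
    {L : ℝ → ℝ} (hL_conv : ConvexOn ℝ Set.univ L) (hL_nonneg : ∀ u, 0 ≤ L u)
    (hL_one : ∀ u ≤ 0, 1 ≤ L u) {b : ℝ} (hb : ∑ j, L (b - v j) < k) :
    (1 / (k : ℝ)) * ∑ j ∈ range k, kthLargest v (j + 1) < b := by
  have htop : ∑ j ∈ range k, L (b - kthLargest v (j + 1)) < k :=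
    (sum_range_comp_kthLargest_le v (fun x => hL_nonneg (b - x)) hkn).trans_lt hb
  simpa only [card_range] using
    mean_lt_of_sum_lt_card_mul hL_conv hL_one (s := range k) (by simpa using htop)

/-- if `Σ_j L(b − v_j) ≤ τn` for a convex surrogate `L`, then `b` exceeds the
mean of the `k = ⌊τn⌋ + 1` largest values among the `v_j`. -/
theorem feasible_threshold_gt_topk_mean
    (n : ℕ) (hn : 1 ≤ n) (v : Fin n → ℝ)
    (τ : ℝ) (hτ0 : 0 ≤ τ) (hτ1 : τ < 1)
    (k : ℕ) (hk : k = (⌊τ * (n : ℝ)⌋).toNat + 1)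
    (L : ℝ → ℝ) (hL_conv : ConvexOn ℝ Set.univ L)
    (hL_cont : Continuous L) (hL_anti : Antitone L)
    (hL_nonpos : ∀ u ≤ 0, L 0 ≤ L u) (hL0 : 1 ≤ L 0)
    (hL_pos : ∀ u > 0, 0 ≤ L u ∧ L u < L 0)
    (hL_lim : Filter.Tendsto L Filter.atTop (nhds 0))
    (b : ℝ) (hb : ∑ j, L (b - v j) ≤ τ * n) :
    (1 / (k : ℝ)) * ∑ j ∈ Finset.range k, kthLargest v (j + 1) < b := by
  rw [Int.floor_toNat] at hk
  have hτk : τ * n < k := by simpa [hk] using Nat.lt_floor_add_one (τ * n)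
  have hτn : τ * n < n := mul_lt_of_lt_one_left (by positivity) hτ1
  have hkn : k ≤ n := hk ▸ (Nat.floor_lt (by positivity)).mpr hτn
  exact feasible_threshold_gt_topk_mean_general hkn v hL_conv (hL_anti.le_of_tendsto hL_lim)
    (fun u hu => hL0.trans (hL_nonpos u hu)) (hb.trans_lt hτk)
end

section
/- Let β_1,...,β_n be real numbers (n ≥ 1) and let k be an integer with 1 ≤ k ≤ n. Define f(μ) = kμ + Σ_{j=1}^n [β_j − μ]_+ for μ ∈ ℝ. Then f attains its global minimum over ℝ at μ = β_[k], and its minimum value equals Σ_{j=1}^k β_[j], the sum of the k largest entries. -/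
section PosPart

variable {ι G : Type*} [AddCommGroup G] [Lattice G] [IsOrderedAddMonoid G] {s t : Finset ι}

lemma sum_le_card_nsmul_add_sum_posPart_sub (hts : t ⊆ s) (b : ι → G) (μ : G) :
    ∑ i ∈ t, b i ≤ t.card • μ + ∑ i ∈ s, (b i - μ)⁺ := by
  calc
    ∑ i ∈ t, b i = t.card • μ + ∑ i ∈ t, (b i - μ) := by simp
    _ ≤ t.card • μ + ∑ i ∈ t, (b i - μ)⁺ := by gcongr; exact le_posPart _
    _ ≤ t.card • μ + ∑ i ∈ s, (b i - μ)⁺ := by gcongr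

lemma card_nsmul_add_sum_posPart_sub_eq_sum {b : ι → G} {μ : G} (hts : t ⊆ s)
    (h_above : ∀ i ∈ t, μ ≤ b i) (h_below : ∀ i ∈ s, i ∉ t → b i ≤ μ) :
    t.card • μ + ∑ i ∈ s, (b i - μ)⁺ = ∑ i ∈ t, b i := by
  calc
    t.card • μ + ∑ i ∈ s, (b i - μ)⁺ = t.card • μ + ∑ i ∈ t, (b i - μ)⁺ := by
      rw [Finset.sum_subset hts fun i his hit ↦
        posPart_eq_zero.2 (sub_nonpos.2 (h_below i his hit))]
    _ = t.card • μ + ∑ i ∈ t, (b i - μ) := by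
      rw [Finset.sum_congr rfl fun i hi ↦ posPart_eq_self.2 (sub_nonneg.2 (h_above i hi))]
    _ = ∑ i ∈ t, b i := by simp

end PosPart

section KthLargest

variable {n : ℕ} (v : Fin n → ℝ)

lemma ofFn_kthLargest :
    List.ofFn (fun i : Fin n ↦ kthLargest v (i + 1)) = (List.ofFn v).insertionSort (· ≥ ·) :=
  List.ext_getElem (by simp) fun _ _ _ ↦ by simp [kthLargest]

lemma sum_comp_kthLargest {M : Type*} [AddCommMonoid M] (g : ℝ → M) :
    ∑ i ∈ Finset.range n, g (kthLargest v (i + 1)) = ∑ j, g (v j) := by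
  have h_perm : (List.ofFn fun i : Fin n ↦ kthLargest v (i + 1)).Perm (List.ofFn v) :=
    ofFn_kthLargest v ▸ List.perm_insertionSort _ _
  simpa only [List.map_ofFn, List.sum_ofFn, Function.comp_apply, Finset.sum_range]
    using (h_perm.map g).sum_eq

lemma antitoneOn_kthLargest : AntitoneOn (kthLargest v) (Set.Icc 1 n) := by
  have h_antitone : Antitone fun i : Fin n ↦ kthLargest v (i + 1) := by
    rw [← List.sortedGE_ofFn_iff, ofFn_kthLargest]
    exact List.sortedGE_insertionSort
  rintro i ⟨hi, hin⟩ j ⟨hj, hjn⟩ hij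
  simpa only [Nat.sub_add_cancel hi, Nat.sub_add_cancel hj] using
    @h_antitone ⟨i - 1, by omega⟩ ⟨j - 1, by omega⟩ (Nat.sub_le_sub_right hij 1)

end KthLargest

/-- `f(μ) = kμ + Σ_j [β_j − μ]_+` attains its global minimum at `μ = β_[k]`,
with minimum value the sum of the `k` largest entries of `β`. -/
theorem kmu_plus_pospart_min_at_kth_largest
    (n k : ℕ) (hn : 1 ≤ n) (hk1 : 1 ≤ k) (hkn : k ≤ n) (β : Fin n → ℝ)
    (f : ℝ → ℝ) (hf : ∀ μ, f μ = (k : ℝ) * μ + ∑ j, max (β j - μ) 0) :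
    (∀ μ : ℝ, f (kthLargest β k) ≤ f μ) ∧
      f (kthLargest β k) = ∑ j ∈ Finset.range k, kthLargest β (j + 1) := by
  have hf_sorted (μ : ℝ) : f μ = (Finset.range k).card • μ +
      ∑ i ∈ Finset.range n, (kthLargest β (i + 1) - μ)⁺ := by
    rw [hf, Finset.card_range, nsmul_eq_mul, sum_comp_kthLargest β fun x ↦ (x - μ)⁺]
    rfl
  have h_subset : Finset.range k ⊆ Finset.range n := Finset.range_mono hkn
  have h_anti {i j : ℕ} (hi : 1 ≤ i) (hij : i ≤ j) (hj : j ≤ n) :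
      kthLargest β j ≤ kthLargest β i :=
    antitoneOn_kthLargest β ⟨hi, hij.trans hj⟩ ⟨hi.trans hij, hj⟩ hij
  have h_value : f (kthLargest β k) = ∑ j ∈ Finset.range k, kthLargest β (j + 1) := by
    rw [hf_sorted]
    refine card_nsmul_add_sum_posPart_sub_eq_sum h_subset (fun i hi ↦ ?_) fun i hin hik ↦ ?_
    · exact h_anti i.succ_pos (Finset.mem_range.1 hi) hkn
    · rw [Finset.mem_range] at hin hik
      exact h_anti hk1 (by omega) hin
  refine ⟨fun μ ↦ ?_, h_value⟩
  rw [h_value, hf_sorted]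
  exact sum_le_card_nsmul_add_sum_posPart_sub h_subset _ μ
end

section
/- Let α⁰ ∈ ℝ^m, β⁰ ∈ ℝ^n, and let k be an integer with 1 ≤ k ≤ n. Consider the projection problem: minimize ½‖α − α⁰‖² + ½‖β − β⁰‖² over α ∈ ℝ^m, β ∈ ℝ^n subject to α ≥ 0, β ≥ 0, Σ_{i=1}^m α_i = Σ_{j=1}^n β_j, and β_j ≤ (1/k)·Σ_{i=1}^m α_i for every j. Then a feasible pair (α*, β*) is an optimal solution of this problem if and only if there exist C* ≥ 0 and λ*, μ* ∈ ℝ satisfying the system: (a) C* = Σ_{i=1}^m [α_i⁰ − λ*]_+; (b) C* = Σ_{j=1}^n min{[β_j⁰ − μ*]_+, C*/k}; (c) 0 = λ* + μ* + (1/k)·Σ_{j=1}^n [β_j⁰ − μ* − C*/k]_+; together with the closed forms α_i* = [α_i⁰ − λ*]_+ for every i and β_j* = min{[β_j⁰ − μ*]_+, C*/k} for every j. -/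
/-!
The feasible set is a convex cone `K`, so `z` is the projection of `z₀` onto `K` iff the residual
`z₀ - z` lies in the polar of `K` and is orthogonal to `z`. Maximizing a linear form over the
slice `∑ βⱼ = 1` of `K` is a fractional knapsack problem, whose duality certifies membership in the
polar by two multipliers `λ`, `μ`. Given such a certificate, orthogonality to `z` is complementary
slackness, and this can be solved coordinate by coordinate: the solution is the closed form.
-/

/-- The feasible set `Γ_k`: nonnegative `(α, β)` with matching sums and
`β_j ≤ (1/k) Σ_i α_i` for every `j`. -/
def TopkSimplex (m n k : ℕ) (α : Fin m → ℝ) (β : Fin n → ℝ) : Prop :=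
  (∀ i, 0 ≤ α i) ∧ (∀ j, 0 ≤ β j) ∧ (∑ i, α i) = (∑ j, β j) ∧
    ∀ j, β j ≤ (1 / (k : ℝ)) * ∑ i, α i

/-- The projection objective `½‖α − α⁰‖² + ½‖β − β⁰‖²`. -/
noncomputable def projObj {m n : ℕ} (α0 : Fin m → ℝ) (β0 : Fin n → ℝ)
    (α : Fin m → ℝ) (β : Fin n → ℝ) : ℝ :=
  (1 / 2) * (∑ i, (α i - α0 i) ^ 2) + (1 / 2) * (∑ j, (β j - β0 j) ^ 2)

section Cone

variable {E : Type*} [NormedAddCommGroup E] [InnerProductSpace ℝ E]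

theorem forall_mem_norm_sub_le_iff_inner_nonpos {K : PointedCone ℝ E} {z₀ z : E} (hz : z ∈ K) :
    (∀ x ∈ K, ‖z - z₀‖ ≤ ‖x - z₀‖) ↔
      (∀ x ∈ K, inner ℝ (z₀ - z) x ≤ 0) ∧ inner ℝ (z₀ - z) z = 0 := by
  have min_iff_eq_iInf : (∀ x ∈ K, ‖z - z₀‖ ≤ ‖x - z₀‖) ↔
      ‖z₀ - z‖ = ⨅ x : (K : Set E), ‖z₀ - x‖ := by
    simp only [norm_sub_rev _ z₀]
    have : Nonempty (K : Set E) := ⟨⟨z, hz⟩⟩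
    have bdd : BddBelow (Set.range fun x : (K : Set E) ↦ ‖z₀ - x‖) :=
      ⟨0, Set.forall_mem_range.2 fun _ ↦ norm_nonneg _⟩
    exact ⟨fun h ↦ le_antisymm (le_ciInf fun x ↦ h x x.2) (ciInf_le bdd ⟨z, hz⟩),
      fun h x hx ↦ h.trans_le (ciInf_le bdd ⟨x, hx⟩)⟩
  rw [min_iff_eq_iInf, norm_eq_iInf_iff_real_inner_le_zero K.convex hz]
  constructor
  · intro h
    have inner_nonpos : ∀ x ∈ K, inner ℝ (z₀ - z) x ≤ 0 := fun x hx ↦ by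
      simpa using h (x + z) (K.add_mem hx hz)
    have inner_self_nonneg : 0 ≤ inner ℝ (z₀ - z) z := by
      simpa using h 0 K.zero_mem
    exact ⟨inner_nonpos, (inner_nonpos z hz).antisymm inner_self_nonneg⟩
  · rintro ⟨inner_nonpos, inner_self⟩ x hx
    rw [inner_sub_right, inner_self, sub_zero]
    exact inner_nonpos x hx

end Cone

section Clamp

variable {x x₀ c t : ℝ}

theorem eq_max_sub_zero_iff :
    x = max (x₀ - t) 0 ↔ 0 ≤ x ∧ x₀ - x ≤ t ∧ (t - (x₀ - x)) * x = 0 := by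
  constructor
  · rintro rfl
    rcases le_total (x₀ - t) 0 with h | h
    · simpa only [max_eq_right h, sub_zero, mul_zero, le_refl, and_true, true_and, sub_nonpos]
        using h
    · simp [h]
  · rintro ⟨hx, ht, hslack⟩
    rcases mul_eq_zero.1 hslack with h | rfl
    · rw [max_eq_left (by linarith)]
      linarith
    · rw [max_eq_right (by linarith)]

theorem eq_min_max_sub_zero_iff (hc : 0 ≤ c) :
    x = min (max (x₀ - t) 0) c ↔
      0 ≤ x ∧ x ≤ c ∧ (x₀ - x - t) * x = max (x₀ - x - t) 0 * c := by
  constructor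
  · rintro rfl
    refine ⟨le_min (le_max_right _ _) hc, min_le_right _ _, ?_⟩
    rcases le_total (x₀ - t) c with h | h
    · rw [min_eq_left (max_le h hc)]
      rcases le_total (x₀ - t) 0 with h' | h'
      · rw [max_eq_right h', max_eq_right (by linarith)]
        ring
      · rw [max_eq_left h', max_eq_right (by linarith)]
        ring
    · rw [min_eq_right (le_max_of_le_left h), max_eq_left (by linarith)]
  · rintro ⟨hx, hxc, hslack⟩
    rcases lt_trichotomy (x₀ - x) t with h | h | h
    · have x_eq_zero : x = 0 := by
        rw [max_eq_right (by linarith), zero_mul] at hslack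
        exact (mul_eq_zero.1 hslack).resolve_left (by linarith)
      rw [max_eq_right (by linarith), min_eq_left hc, x_eq_zero]
    · rw [max_eq_left (by linarith), min_eq_left (by linarith)]
      linarith
    · have x_eq_cap : x = c := by
        rw [max_eq_left (by linarith)] at hslack
        exact mul_left_cancel₀ (by linarith) hslack
      rw [max_eq_left (by linarith), min_eq_right (by linarith), x_eq_cap]

theorem max_sub_sub_eq_of_eq_min_max (hc : 0 ≤ c) (hx : x = min (max (x₀ - t) 0) c) :
    max (x₀ - x - t) 0 = max (x₀ - t - c) 0 := by
  subst hx
  rcases le_total (x₀ - t) c with h | h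
  · rw [min_eq_left (max_le h hc), max_eq_right (by linarith [le_max_left (x₀ - t) 0]),
      max_eq_right (by linarith)]
  · rw [min_eq_right (le_max_of_le_left h), sub_right_comm]

end Clamp

section Knapsack

variable {κ : Type*} [Fintype κ]

theorem exists_weighted_quantile {R : Type*} [LinearOrder R] (w : κ → ℝ) (b : κ → R) {p : ℝ}
    (hp : 0 < p) (hpw : p ≤ ∑ j, w j) :
    ∃ q, ∑ j with q < b j, w j ≤ p ∧ p ≤ ∑ j with q ≤ b j, w j := by
  have : Nonempty κ := by
    by_contra! h
    simp only [Finset.univ_eq_empty, Finset.sum_empty] at hpw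
    exact hp.not_ge hpw
  obtain ⟨jmin, hjmin⟩ := Finite.exists_min b
  obtain ⟨q, hq, hmax⟩ := Finset.exists_max_image
    (Finset.univ.filter fun i ↦ p ≤ ∑ j with b i ≤ b j, w j) b ⟨jmin, by simpa [hjmin] using hpw⟩
  refine ⟨b q, ?_, by simpa using hq⟩
  by_contra! hlt
  obtain ⟨i, hi, hmin⟩ := Finset.exists_min_image (Finset.univ.filter fun j ↦ b q < b j) b
    (Finset.nonempty_of_sum_ne_zero (hp.trans hlt).ne')
  simp only [Finset.mem_filter, Finset.mem_univ, true_and] at hi hmin hmax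
  have upper_set_eq : ∀ j, b i ≤ b j ↔ b q < b j := fun j ↦ ⟨hi.trans_le, hmin j⟩
  refine (hmax i ?_).not_gt hi
  simpa only [upper_set_eq] using hlt.le

/-- The Lagrangian dual objective `t + ∑ wⱼ [bⱼ - t]₊` of the fractional knapsack problem of
maximizing `∑ bⱼ yⱼ` subject to `0 ≤ y ≤ w` and `∑ yⱼ = 1`. -/
def knapsackDual (w b : κ → ℝ) (t : ℝ) : ℝ := t + ∑ j, w j * max (b j - t) 0

theorem exists_knapsackDual_le_of_sum_lt_one {w : κ → ℝ} (hw : ∑ j, w j < 1) (b : κ → ℝ) (B : ℝ) :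
    ∃ t, knapsackDual w b t ≤ B := by
  obtain ⟨l, hl⟩ := Finite.exists_ge b
  have slope_pos : 0 < 1 - ∑ j, w j := sub_pos.2 hw
  refine ⟨min l ((B - ∑ j, w j * b j) / (1 - ∑ j, w j)), ?_⟩
  set t := min l ((B - ∑ j, w j * b j) / (1 - ∑ j, w j))
  have t_le : ∀ j, t ≤ b j := fun j ↦ (min_le_left _ _).trans (hl j)
  calc
    knapsackDual w b t = t * (1 - ∑ j, w j) + ∑ j, w j * b j := by
      simp only [knapsackDual, max_eq_left (sub_nonneg.2 (t_le _)), mul_sub,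
        Finset.sum_sub_distrib, ← Finset.sum_mul]
      ring
    _ ≤ B := by
      have := (le_div_iff₀ slope_pos).1 (min_le_right l _ : t ≤ _)
      linarith

theorem exists_sum_mul_eq_knapsackDual {w : κ → ℝ} (hw : ∀ j, 0 ≤ w j) (hsum : 1 ≤ ∑ j, w j)
    (b : κ → ℝ) :
    ∃ (t : ℝ) (y : κ → ℝ), (∀ j, 0 ≤ y j) ∧ (∀ j, y j ≤ w j) ∧ ∑ j, y j = 1 ∧
      ∑ j, b j * y j = knapsackDual w b t := by
  obtain ⟨t, ht_lt, ht_le⟩ := exists_weighted_quantile w b one_pos hsum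
  have one_mem_segment : (1 : ℝ) ∈ segment ℝ (∑ j with t < b j, w j) (∑ j with t ≤ b j, w j) := by
    rw [segment_eq_Icc (ht_lt.trans ht_le)]
    exact ⟨ht_lt, ht_le⟩
  obtain ⟨p, q, hp, hq, hpq, hone⟩ := one_mem_segment
  -- Items above the threshold are taken whole, those at the threshold in the proportion `q`.
  let y j := p * (if t < b j then w j else 0) + q * (if t ≤ b j then w j else 0)
  have y_of_lt : ∀ j, t < b j → y j = w j := fun j h ↦ by
    simp only [y, h, h.le, if_true, ← add_mul, hpq, one_mul]
  have y_of_eq : ∀ j, b j = t → y j = q * w j := fun j h ↦ by simp [y, h]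
  have y_of_gt : ∀ j, b j < t → y j = 0 := fun j h ↦ by simp [y, h.not_ge, h.not_gt]
  have sum_y : ∑ j, y j = 1 := by
    simpa only [y, Finset.sum_add_distrib, ← Finset.mul_sum, ← Finset.sum_filter,
      smul_eq_mul] using hone
  have slack : ∀ j, b j * y j = t * y j + w j * max (b j - t) 0 := fun j ↦ by
    rcases lt_trichotomy (b j) t with h | h | h
    · simp [y_of_gt j h, h.le]
    · simp [h]
    · rw [y_of_lt j h, max_eq_left (sub_nonneg.2 h.le)]
      ring
  refine ⟨t, y, fun j ↦ ?_, fun j ↦ ?_, sum_y, ?_⟩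
  · have := hw j
    positivity
  · rcases lt_trichotomy (b j) t with h | h | h
    · exact (y_of_gt j h).trans_le (hw j)
    · rw [y_of_eq j h]
      exact mul_le_of_le_one_left (hw j) (by linarith)
    · exact (y_of_lt j h).le
  · rw [Finset.sum_congr rfl fun j _ ↦ slack j, Finset.sum_add_distrib, ← Finset.mul_sum, sum_y,
      mul_one, knapsackDual]

end Knapsack

section CappedCone

/-- The vector `(α, β)` in the Euclidean space over `ι ⊕ κ`. -/
def pairVec {ι κ : Type*} (α : ι → ℝ) (β : κ → ℝ) : EuclideanSpace ℝ (ι ⊕ κ) :=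
  WithLp.toLp 2 (Sum.elim α β)

variable {ι κ : Type*} [Fintype ι] [Fintype κ] {w : κ → ℝ}

/-- The cone of pairs of nonnegative vectors `(α, β)` with equal sums and `βⱼ ≤ wⱼ ∑ αᵢ`. Constant
caps `wⱼ = 1 / k` give `Γ_k`. -/
def cappedCone (ι : Type*) [Fintype ι] (w : κ → ℝ) : PointedCone ℝ (EuclideanSpace ℝ (ι ⊕ κ)) where
  carrier := {z | (∀ i, 0 ≤ z (.inl i)) ∧ (∀ j, 0 ≤ z (.inr j)) ∧
    ∑ i, z (.inl i) = ∑ j, z (.inr j) ∧ ∀ j, z (.inr j) ≤ w j * ∑ i, z (.inl i)}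
  add_mem' := by
    rintro x y ⟨hxα, hxβ, hxsum, hxcap⟩ ⟨hyα, hyβ, hysum, hycap⟩
    refine ⟨fun i ↦ add_nonneg (hxα i) (hyα i), fun j ↦ add_nonneg (hxβ j) (hyβ j), ?_,
      fun j ↦ ?_⟩
    · simp only [PiLp.add_apply, Finset.sum_add_distrib, hxsum, hysum]
    · simpa only [PiLp.add_apply, Finset.sum_add_distrib, mul_add] using
        add_le_add (hxcap j) (hycap j)
  zero_mem' := by simp
  smul_mem' := by
    rintro ⟨t, ht⟩ x ⟨hα, hβ, hsum, hcap⟩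
    refine ⟨fun i ↦ mul_nonneg ht (hα i), fun j ↦ mul_nonneg ht (hβ j), ?_, fun j ↦ ?_⟩
    · simp [Nonneg.mk_smul, ← Finset.mul_sum, hsum]
    · simpa [Nonneg.mk_smul, ← Finset.mul_sum, mul_left_comm] using
        mul_le_mul_of_nonneg_left (hcap j) ht

/-- A pair of multipliers, for the constraints `∑ αᵢ = C` and `∑ βⱼ = C`, certifying that the linear
form `r` is nonpositive on the capped cone. -/
def IsPolarCertificate (w : κ → ℝ) (r : EuclideanSpace ℝ (ι ⊕ κ)) (lam mu : ℝ) : Prop :=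
  (∀ i, r (.inl i) ≤ lam) ∧ lam + knapsackDual w (fun j ↦ r (.inr j)) mu = 0

theorem inner_eq_sum_inl_add_sum_inr (r z : EuclideanSpace ℝ (ι ⊕ κ)) :
    inner ℝ r z = ∑ i, r (.inl i) * z (.inl i) + ∑ j, r (.inr j) * z (.inr j) := by
  simp [PiLp.inner_apply, mul_comm]

theorem neg_inner_eq_sum_slack {r z : EuclideanSpace ℝ (ι ⊕ κ)} {lam mu : ℝ}
    (hbalance : lam + knapsackDual w (fun j ↦ r (.inr j)) mu = 0)
    (hz : ∑ i, z (.inl i) = ∑ j, z (.inr j)) :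
    -inner ℝ r z = ∑ i, (lam - r (.inl i)) * z (.inl i) +
      ∑ j, (max (r (.inr j) - mu) 0 * (w j * ∑ i, z (.inl i)) -
        (r (.inr j) - mu) * z (.inr j)) := by
  set C := ∑ i, z (.inl i) with hC
  have sum_cap_slack : ∑ j, max (r (.inr j) - mu) 0 * (w j * C) =
      (∑ j, w j * max (r (.inr j) - mu) 0) * C := by
    rw [Finset.sum_mul]
    exact Finset.sum_congr rfl fun j _ ↦ by ring
  simp only [sub_mul, Finset.sum_sub_distrib, ← Finset.mul_sum, sum_cap_slack, ← hz, ← hC,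
    inner_eq_sum_inl_add_sum_inr]
  simp only [knapsackDual] at hbalance
  linear_combination -C * hbalance

theorem IsPolarCertificate.slack_inl_nonneg {r z : EuclideanSpace ℝ (ι ⊕ κ)} {lam mu : ℝ}
    (hcert : IsPolarCertificate w r lam mu) (hz : z ∈ cappedCone ι w) (i : ι) :
    0 ≤ (lam - r (.inl i)) * z (.inl i) :=
  mul_nonneg (sub_nonneg.2 (hcert.1 i)) (hz.1 i)

theorem slack_inr_nonneg {z : EuclideanSpace ℝ (ι ⊕ κ)} (hz : z ∈ cappedCone ι w) (s : ℝ) (j : κ) :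
    0 ≤ max s 0 * (w j * ∑ i, z (.inl i)) - s * z (.inr j) :=
  sub_nonneg.2 <| mul_le_mul (le_max_left _ _) (hz.2.2.2 j) (hz.2.1 j) (le_max_right _ _)

theorem IsPolarCertificate.inner_nonpos {r z : EuclideanSpace ℝ (ι ⊕ κ)} {lam mu : ℝ}
    (hcert : IsPolarCertificate w r lam mu) (hz : z ∈ cappedCone ι w) : inner ℝ r z ≤ 0 := by
  rw [← neg_nonneg, neg_inner_eq_sum_slack hcert.2 hz.2.2.1]
  exact add_nonneg (Finset.sum_nonneg fun i _ ↦ hcert.slack_inl_nonneg hz i)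
    (Finset.sum_nonneg fun j _ ↦ slack_inr_nonneg hz _ j)

theorem IsPolarCertificate.inner_eq_zero_iff {r z : EuclideanSpace ℝ (ι ⊕ κ)} {lam mu : ℝ}
    (hcert : IsPolarCertificate w r lam mu) (hz : z ∈ cappedCone ι w) :
    inner ℝ r z = 0 ↔ (∀ i, (lam - r (.inl i)) * z (.inl i) = 0) ∧
      ∀ j, (r (.inr j) - mu) * z (.inr j) = max (r (.inr j) - mu) 0 * (w j * ∑ i, z (.inl i)) := by
  have hα := hcert.slack_inl_nonneg hz
  have hβ := fun j ↦ slack_inr_nonneg hz (r (.inr j) - mu) j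
  rw [← neg_eq_zero, neg_inner_eq_sum_slack hcert.2 hz.2.2.1,
    add_eq_zero_iff_of_nonneg (Finset.sum_nonneg fun i _ ↦ hα i)
      (Finset.sum_nonneg fun j _ ↦ hβ j),
    Fintype.sum_eq_zero_iff_of_nonneg hα, Fintype.sum_eq_zero_iff_of_nonneg hβ]
  simp only [funext_iff, Pi.zero_apply, sub_eq_zero, eq_comm (a := max _ _ * _)]

theorem exists_isPolarCertificate (hw : ∀ j, 0 ≤ w j) {r : EuclideanSpace ℝ (ι ⊕ κ)}
    (hr : ∀ z ∈ cappedCone ι w, inner ℝ r z ≤ 0) : ∃ lam mu, IsPolarCertificate w r lam mu := by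
  classical
  suffices ∃ mu, ∀ i, r (.inl i) ≤ -knapsackDual w (fun j ↦ r (.inr j)) mu by
    obtain ⟨mu, hmu⟩ := this
    exact ⟨_, mu, hmu, neg_add_cancel _⟩
  rcases lt_or_ge (∑ j, w j) 1 with hsum | hsum
  · obtain ⟨B, hB⟩ := Finite.exists_le fun i ↦ r (.inl i)
    obtain ⟨mu, hmu⟩ := exists_knapsackDual_le_of_sum_lt_one hsum (fun j ↦ r (.inr j)) (-B)
    exact ⟨mu, fun i ↦ (hB i).trans (le_neg_of_le_neg hmu)⟩
  · obtain ⟨mu, y, hy0, hyw, hy1, hval⟩ := exists_sum_mul_eq_knapsackDual hw hsum fun j ↦ r (.inr j)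
    refine ⟨mu, fun i ↦ ?_⟩
    have single_nonneg : 0 ≤ (Pi.single i 1 : ι → ℝ) := Pi.single_nonneg.2 zero_le_one
    have mem : pairVec (Pi.single i 1) y ∈ cappedCone ι w :=
      ⟨single_nonneg, hy0, by simp [pairVec, hy1], by simpa [pairVec] using hyw⟩
    have inner_le := hr _ mem
    simp only [inner_eq_sum_inl_add_sum_inr, pairVec, Sum.elim_inl, Sum.elim_inr, hval,
      Pi.single_apply, mul_ite, mul_one, mul_zero, Finset.sum_ite_eq', Finset.mem_univ,
      if_true] at inner_le
    linarith

theorem forall_mem_cappedCone_norm_sub_le_iff_exists_certificate (hw : ∀ j, 0 ≤ w j)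
    {z₀ z : EuclideanSpace ℝ (ι ⊕ κ)} (hz : z ∈ cappedCone ι w) :
    (∀ x ∈ cappedCone ι w, ‖z - z₀‖ ≤ ‖x - z₀‖) ↔
      ∃ lam mu, IsPolarCertificate w (z₀ - z) lam mu ∧ inner ℝ (z₀ - z) z = 0 := by
  rw [forall_mem_norm_sub_le_iff_inner_nonpos hz]
  constructor
  · rintro ⟨hpolar, horth⟩
    obtain ⟨lam, mu, hcert⟩ := exists_isPolarCertificate hw hpolar
    exact ⟨lam, mu, hcert, horth⟩
  · rintro ⟨lam, mu, hcert, horth⟩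
    exact ⟨fun x hx ↦ hcert.inner_nonpos hx, horth⟩

theorem isPolarCertificate_sub_and_inner_eq_zero_iff
    {z₀ z : EuclideanSpace ℝ (ι ⊕ κ)} (hz : z ∈ cappedCone ι w) {C lam mu : ℝ}
    (hC : C = ∑ i, z (.inl i)) :
    IsPolarCertificate w (z₀ - z) lam mu ∧ inner ℝ (z₀ - z) z = 0 ↔
      0 = lam + mu + ∑ j, w j * max (z₀ (.inr j) - mu - w j * C) 0 ∧
        (∀ i, z (.inl i) = max (z₀ (.inl i) - lam) 0) ∧
        ∀ j, z (.inr j) = min (max (z₀ (.inr j) - mu) 0) (w j * C) := by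
  have cap_nonneg : ∀ j, 0 ≤ w j * C := fun j ↦ (hz.2.1 j).trans (hC ▸ hz.2.2.2 j)
  have balance_iff (hβ : ∀ j, z (.inr j) = min (max (z₀ (.inr j) - mu) 0) (w j * C)) :
      lam + knapsackDual w (fun j ↦ (z₀ - z) (.inr j)) mu = 0 ↔
        0 = lam + mu + ∑ j, w j * max (z₀ (.inr j) - mu - w j * C) 0 := by
    simp only [knapsackDual, PiLp.sub_apply,
      max_sub_sub_eq_of_eq_min_max (cap_nonneg _) (hβ _), add_assoc, eq_comm]
  constructor
  · rintro ⟨hcert, horth⟩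
    obtain ⟨slackα, slackβ⟩ := (hcert.inner_eq_zero_iff hz).1 horth
    have hβ : ∀ j, z (.inr j) = min (max (z₀ (.inr j) - mu) 0) (w j * C) := fun j ↦
      (eq_min_max_sub_zero_iff (cap_nonneg j)).2
        ⟨hz.2.1 j, hC ▸ hz.2.2.2 j, hC ▸ slackβ j⟩
    exact ⟨(balance_iff hβ).1 hcert.2,
      fun i ↦ eq_max_sub_zero_iff.2 ⟨hz.1 i, hcert.1 i, slackα i⟩, hβ⟩
  · rintro ⟨hbalance, hα, hβ⟩
    have hcert : IsPolarCertificate w (z₀ - z) lam mu :=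
      ⟨fun i ↦ (eq_max_sub_zero_iff.1 (hα i)).2.1, (balance_iff hβ).2 hbalance⟩
    exact ⟨hcert, (hcert.inner_eq_zero_iff hz).2
      ⟨fun i ↦ (eq_max_sub_zero_iff.1 (hα i)).2.2,
        fun j ↦ hC ▸ ((eq_min_max_sub_zero_iff (cap_nonneg j)).1 (hβ j)).2.2⟩⟩

theorem projection_topk_simplex_optimality_characterization_general (hw : ∀ j, 0 ≤ w j)
    {z₀ z : EuclideanSpace ℝ (ι ⊕ κ)} (hz : z ∈ cappedCone ι w) :
    (∀ x ∈ cappedCone ι w, ‖z - z₀‖ ≤ ‖x - z₀‖) ↔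
      ∃ C lam mu : ℝ, 0 ≤ C ∧
        C = ∑ i, max (z₀ (.inl i) - lam) 0 ∧
        C = ∑ j, min (max (z₀ (.inr j) - mu) 0) (w j * C) ∧
        0 = lam + mu + ∑ j, w j * max (z₀ (.inr j) - mu - w j * C) 0 ∧
        (∀ i, z (.inl i) = max (z₀ (.inl i) - lam) 0) ∧
        ∀ j, z (.inr j) = min (max (z₀ (.inr j) - mu) 0) (w j * C) := by
  rw [forall_mem_cappedCone_norm_sub_le_iff_exists_certificate hw hz]
  constructor
  · rintro ⟨lam, mu, h⟩
    obtain ⟨hbalance, hα, hβ⟩ := (isPolarCertificate_sub_and_inner_eq_zero_iff hz rfl).1 h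
    exact ⟨∑ i, z (.inl i), lam, mu, Finset.sum_nonneg fun i _ ↦ hz.1 i,
      Finset.sum_congr rfl fun i _ ↦ hα i,
      hz.2.2.1.trans (Finset.sum_congr rfl fun j _ ↦ hβ j), hbalance, hα, hβ⟩
  · rintro ⟨C, lam, mu, -, hCα, -, hbalance, hα, hβ⟩
    have hC : C = ∑ i, z (.inl i) := hCα.trans (Finset.sum_congr rfl fun i _ ↦ (hα i).symm)
    exact ⟨lam, mu, (isPolarCertificate_sub_and_inner_eq_zero_iff hz hC).2 ⟨hbalance, hα, hβ⟩⟩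

end CappedCone

section TopkSimplex

variable {m n k : ℕ}

theorem pairVec_mem_cappedCone_iff {α : Fin m → ℝ} {β : Fin n → ℝ} :
    pairVec α β ∈ cappedCone (Fin m) (fun _ ↦ 1 / (k : ℝ)) ↔ TopkSimplex m n k α β :=
  Iff.rfl

theorem projObj_eq_norm_sub_sq (α0 : Fin m → ℝ) (β0 : Fin n → ℝ) (α : Fin m → ℝ) (β : Fin n → ℝ) :
    projObj α0 β0 α β = (1 / 2) * ‖pairVec α β - pairVec α0 β0‖ ^ 2 := by
  simp [projObj, pairVec, EuclideanSpace.norm_sq_eq, mul_add]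

theorem forall_projObj_le_iff_forall_norm_sub_le (α0 αs : Fin m → ℝ) (β0 βs : Fin n → ℝ) :
    (∀ α β, TopkSimplex m n k α β → projObj α0 β0 αs βs ≤ projObj α0 β0 α β) ↔
      ∀ x ∈ cappedCone (Fin m) (fun _ : Fin n ↦ 1 / (k : ℝ)),
        ‖pairVec αs βs - pairVec α0 β0‖ ≤ ‖x - pairVec α0 β0‖ := by
  have projObj_le_iff (α : Fin m → ℝ) (β : Fin n → ℝ) :
      projObj α0 β0 αs βs ≤ projObj α0 β0 α β ↔
        ‖pairVec αs βs - pairVec α0 β0‖ ≤ ‖pairVec α β - pairVec α0 β0‖ := by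
    rw [projObj_eq_norm_sub_sq, projObj_eq_norm_sub_sq, mul_le_mul_iff_right₀ one_half_pos,
      sq_le_sq₀ (norm_nonneg _) (norm_nonneg _)]
  simp only [projObj_le_iff, ← pairVec_mem_cappedCone_iff]
  refine ⟨fun h x hx ↦ ?_, fun h α β ↦ h _⟩
  have pairVec_eta : pairVec (fun i ↦ x (.inl i)) (fun j ↦ x (.inr j)) = x := by
    ext (i | j) <;> rfl
  rw [← pairVec_eta] at hx ⊢
  exact h _ _ hx

end TopkSimplex

/-- KKT characterization of the Euclidean projection onto the top-`k`
simplex `Γ_k`. -/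
theorem projection_topk_simplex_optimality_characterization
    (m n k : ℕ) (hk1 : 1 ≤ k) (hkn : k ≤ n)
    (α0 : Fin m → ℝ) (β0 : Fin n → ℝ)
    (αs : Fin m → ℝ) (βs : Fin n → ℝ) (hfeas : TopkSimplex m n k αs βs) :
    (∀ α β, TopkSimplex m n k α β → projObj α0 β0 αs βs ≤ projObj α0 β0 α β) ↔
      ∃ C lam mu : ℝ, 0 ≤ C ∧
        C = (∑ i, max (α0 i - lam) 0) ∧
        C = (∑ j, min (max (β0 j - mu) 0) (C / k)) ∧
        0 = lam + mu + (1 / (k : ℝ)) * ∑ j, max (β0 j - mu - C / k) 0 ∧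
        (∀ i, αs i = max (α0 i - lam) 0) ∧
        (∀ j, βs j = min (max (β0 j - mu) 0) (C / k)) := by
  rw [forall_projObj_le_iff_forall_norm_sub_le]
  simpa only [pairVec, Sum.elim_inl, Sum.elim_inr, one_div_mul_eq_div, Finset.mul_sum] using
    projection_topk_simplex_optimality_characterization_general
      (z₀ := pairVec α0 β0) (fun _ ↦ by positivity) (pairVec_mem_cappedCone_iff.2 hfeas)
end

section
/- Let α⁰ ∈ ℝ^m, β⁰ ∈ ℝ^n, and let k be an integer with 1 ≤ k ≤ n. Suppose C* > 0 and λ*, μ* ∈ ℝ satisfy the system: (a) C* = Σ_{i=1}^m [α_i⁰ − λ*]_+; (b) C* = Σ_{j=1}^n min{[β_j⁰ − μ*]_+, C*/k}; (c) 0 = λ* + μ* + (1/k)·Σ_{j=1}^n [β_j⁰ − μ* − C*/k]_+. Then λ* lies in the open interval (−β_[1]⁰, α_[1]⁰), where α_[1]⁰ is the largest entry of α⁰ and β_[1]⁰ is the largest entry of β⁰. -/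
/-!
Since `∑ i, [α i - λ]₊ = C > 0`, some `α i` exceeds `λ`; likewise some `β j` exceeds `μ`. Put
`c = C / k`. Clipping `[β j - μ]₊` at `c` leaves a total of `C = k * c`, so at most `k` of the
`β j - μ` exceed the cap. If every `β j` were at most `-λ`, each of them would overshoot by at most
`[d - c]₊`, where `d = -λ - μ > 0`. Then `∑ j, [β j - μ - c]₊ ≤ k * [d - c]₊ < k * d`, whereas
equation (c) says that this sum is `k * d`.
-/

lemma exists_lt_of_sum_max_sub_pos {ι M : Type*} [AddCommGroup M] [LinearOrder M]
    [IsOrderedAddMonoid M] {s : Finset ι} {x : ι → M} {a : M}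
    (h : 0 < ∑ i ∈ s, max (x i - a) 0) : ∃ i ∈ s, a < x i := by
  contrapose! h
  exact Finset.sum_nonpos fun i hi => max_le (sub_nonpos.2 (h i hi)) le_rfl

section Excess

variable {ι R : Type*} [CommRing R] [LinearOrder R] [IsStrictOrderedRing R]

lemma max_sub_mul_le_min_mul_max_sub {x b c : R} (hc : 0 ≤ c) (hxb : x ≤ b) :
    max (x - c) 0 * c ≤ min (max x 0) c * max (b - c) 0 := by
  rcases le_total x c with hxc | hcx
  · rw [max_eq_right (sub_nonpos.2 hxc), zero_mul]
    positivity
  · rw [min_eq_right (hcx.trans (le_max_left x 0)), mul_comm]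
    gcongr

lemma sum_max_sub_le_of_sum_min_le {s : Finset ι} {x : ι → R} {b c k : R} (hc : 0 < c)
    (hxb : ∀ i ∈ s, x i ≤ b) (hclip : ∑ i ∈ s, min (max (x i) 0) c ≤ k * c) :
    ∑ i ∈ s, max (x i - c) 0 ≤ k * max (b - c) 0 := by
  -- Weighting by `c` replaces counting the `i` with `c < x i` by a termwise comparison.
  refine le_of_mul_le_mul_right ?_ hc
  calc (∑ i ∈ s, max (x i - c) 0) * c
      = ∑ i ∈ s, max (x i - c) 0 * c := Finset.sum_mul ..
    _ ≤ ∑ i ∈ s, min (max (x i) 0) c * max (b - c) 0 :=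
        Finset.sum_le_sum fun i hi => max_sub_mul_le_min_mul_max_sub hc.le (hxb i hi)
    _ = (∑ i ∈ s, min (max (x i) 0) c) * max (b - c) 0 := (Finset.sum_mul ..).symm
    _ ≤ k * c * max (b - c) 0 := by gcongr
    _ = k * max (b - c) 0 * c := mul_right_comm ..

end Excess

theorem kkt_system_brackets_lambda_general
    {ι κ 𝕜 : Type*} [Fintype ι] [Fintype κ] [Field 𝕜] [LinearOrder 𝕜] [IsStrictOrderedRing 𝕜]
    {α0 : ι → 𝕜} {β0 : κ → 𝕜} {k Cs lam mu : 𝕜} (hk : 0 < k) (hC : 0 < Cs)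
    (ha : Cs = ∑ i, max (α0 i - lam) 0)
    (hb : Cs = ∑ j, min (max (β0 j - mu) 0) (Cs / k))
    (hc : 0 = lam + mu + (1 / k) * ∑ j, max (β0 j - mu - Cs / k) 0) :
    (∃ j, -β0 j < lam) ∧ ∃ i, lam < α0 i := by
  constructor
  · by_contra! hlam
    have hcap : 0 < Cs / k := div_pos hC hk
    have hmu : ∃ j ∈ Finset.univ, mu < β0 j := by
      apply exists_lt_of_sum_max_sub_pos
      calc 0 < Cs := hC
        _ = ∑ j, min (max (β0 j - mu) 0) (Cs / k) := hb
        _ ≤ ∑ j, max (β0 j - mu) 0 := Finset.sum_le_sum fun j _ => min_le_left _ _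
    obtain ⟨j, -, hj⟩ := hmu
    have hgap : 0 < -lam - mu := by linarith [hlam j]
    have hexcess_le : ∑ j, max (β0 j - mu - Cs / k) 0 ≤ k * max (-lam - mu - Cs / k) 0 :=
      sum_max_sub_le_of_sum_min_le hcap (fun j _ => by linarith [hlam j])
        (by rw [← hb, mul_div_cancel₀ _ hk.ne'])
    have hexcess_eq : ∑ j, max (β0 j - mu - Cs / k) 0 = k * (-lam - mu) := by
      rw [← inv_mul_eq_iff_eq_mul₀ hk.ne', ← one_div]
      linarith
    have hgap_le : -lam - mu ≤ max (-lam - mu - Cs / k) 0 :=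
      le_of_mul_le_mul_left (hexcess_eq.symm.trans_le hexcess_le) hk
    exact hgap_le.not_gt (max_lt (sub_lt_self _ hcap) hgap)
  · obtain ⟨i, -, hi⟩ := exists_lt_of_sum_max_sub_pos (ha ▸ hC)
    exact ⟨i, hi⟩

lemma le_kthLargest_one {n : ℕ} (v : Fin n → ℝ) (i : Fin n) : v i ≤ kthLargest v 1 := by
  have hsorted : ((List.ofFn v).insertionSort (· ≥ ·)).Pairwise (· ≥ ·) :=
    List.pairwise_insertionSort _ _
  have hmem : v i ∈ (List.ofFn v).insertionSort (· ≥ ·) :=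
    (List.mem_insertionSort _).2 (List.mem_ofFn.2 ⟨i, rfl⟩)
  unfold kthLargest
  cases hl : (List.ofFn v).insertionSort (· ≥ ·) with
  | nil => simp [hl] at hmem
  | cons a l =>
    rw [hl] at hsorted hmem
    rcases List.mem_cons.1 hmem with h | h
    · exact h.le
    · exact List.rel_of_pairwise_cons hsorted h

/-- bracketing `λ*`: if `C* > 0` and `(C*, λ*, μ*)` solve the KKT system
of the projection onto `Γ_k`, then `λ* ∈ (−β⁰_[1], α⁰_[1])`. -/
theorem kkt_system_brackets_lambda
    (m n k : ℕ) (hm : 1 ≤ m) (hn : 1 ≤ n) (hk1 : 1 ≤ k) (hkn : k ≤ n)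
    (α0 : Fin m → ℝ) (β0 : Fin n → ℝ)
    (Cs lam mu : ℝ) (hC : 0 < Cs)
    (ha : Cs = ∑ i, max (α0 i - lam) 0)
    (hb : Cs = ∑ j, min (max (β0 j - mu) 0) (Cs / k))
    (hc : 0 = lam + mu + (1 / (k : ℝ)) * ∑ j, max (β0 j - mu - Cs / k) 0) :
    -kthLargest β0 1 < lam ∧ lam < kthLargest α0 1 := by
  obtain ⟨⟨j, hj⟩, i, hi⟩ :=
    kkt_system_brackets_lambda_general (Nat.cast_pos.2 hk1) hC ha hb hc
  exact ⟨(neg_le_neg (le_kthLargest_one β0 j)).trans_lt hj, hi.trans_le (le_kthLargest_one α0 i)⟩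
end

section
/- Let β⁰ ∈ ℝ^n, let k be an integer with 1 ≤ k < n, and set C₀ = k·(β_[k]⁰ − β_[k+1]⁰), where β_[j]⁰ denotes the j-th largest entry of β⁰. If C > C₀ and C > 0, then there exists a unique μ ∈ ℝ satisfying Σ_{j=1}^n min{[β_j⁰ − μ]_+, C/k} = C. -/
/-!
Write `D = C / k`. The sum is continuous in `μ`, equals `n * D ≥ C` for very negative `μ` and `0`
for very large `μ`, so a solution exists by the intermediate value theorem.

If `a < b` were both solutions, monotonicity would force every summand to take the same value at
both points, so every entry satisfies `β_j ≤ a` (summand `0`) or `b + D ≤ β_j` (summand `D`).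
As the sum is `k * D`, exactly `k` entries are of the second kind, whence `b + D ≤ β_[k]` and
`β_[k+1] ≤ a`. The gap `β_[k] - β_[k+1]` then exceeds `D`, contradicting `C > C₀`.
-/

open Finset

lemma exists_antitone_comp_perm {α : Type*} [LinearOrder α] {n : ℕ} (v : Fin n → α) :
    ∃ σ : Equiv.Perm (Fin n), Antitone (v ∘ σ) :=
  ⟨Fin.revPerm.trans (Tuple.sort v), (Tuple.monotone_sort v).comp_antitone Fin.rev_anti⟩

section KthLargest

variable {n : ℕ} {v : Fin n → ℝ}

lemma kthLargest_succ_eq_apply {σ : Equiv.Perm (Fin n)} (hσ : Antitone (v ∘ σ)) (i : Fin n) :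
    kthLargest v (i + 1) = v (σ i) := by
  have hperm : ((List.ofFn v).insertionSort (· ≥ ·)).Perm (List.ofFn (v ∘ σ)) :=
    (List.perm_insertionSort _ _).trans (σ.ofFn_comp_perm v).symm
  have hsort : (List.ofFn v).insertionSort (· ≥ ·) = List.ofFn (v ∘ σ) :=
    hperm.eq_of_sortedGE List.sortedGE_insertionSort hσ.sortedGE_ofFn
  simp [kthLargest, hsort]

lemma kthLargest_succ_mem_range (i : Fin n) : kthLargest v (i + 1) ∈ Set.range v := by
  obtain ⟨σ, hσ⟩ := exists_antitone_comp_perm v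
  exact ⟨σ i, (kthLargest_succ_eq_apply hσ i).symm⟩

lemma le_kthLargest_succ_iff (i : Fin n) {t : ℝ} :
    t ≤ kthLargest v (i + 1) ↔ i < #{j | t ≤ v j} := by
  obtain ⟨σ, hσ⟩ := exists_antitone_comp_perm v
  have hcard : #{j | t ≤ (v ∘ σ) j} = #{j | t ≤ v j} := card_equiv σ (by simp)
  rw [kthLargest_succ_eq_apply hσ, ← hcard]
  exact (Tuple.lt_card_ge_iff_apply_ge_of_antitone hσ).symm

lemma sub_le_kthLargest_sub_kthLargest_succ {k : ℕ} (hk : 1 ≤ k) (hkn : k < n) {s t : ℝ}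
    (hgap : ∀ j, v j ≤ s ∨ t ≤ v j) (hcard : #{j | t ≤ v j} = k) :
    t - s ≤ kthLargest v k - kthLargest v (k + 1) := by
  have ht : t ≤ kthLargest v k := by
    obtain ⟨i, rfl⟩ := Nat.exists_eq_add_of_le' hk
    exact (le_kthLargest_succ_iff ⟨i, by omega⟩).2 (Nat.lt_of_succ_le hcard.ge)
  have hs : kthLargest v (k + 1) ≤ s := by
    obtain ⟨j, hj⟩ := kthLargest_succ_mem_range (v := v) ⟨k, hkn⟩
    refine hj ▸ (hgap j).resolve_right fun htj => ?_
    exact ((le_kthLargest_succ_iff ⟨k, hkn⟩).1 (hj ▸ htj)).ne' hcard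
  exact sub_le_sub ht hs

end KthLargest

/-- The excess of `x` over the level `μ`, truncated to the interval `[0, D]`: the summand of the
equation to be solved, with `D = C / k`. -/
def cappedExcess (D μ x : ℝ) : ℝ := min (max (x - μ) 0) D

section CappedExcess

variable {D μ a b x : ℝ}

lemma cappedExcess_of_le (hD : 0 ≤ D) (hx : x ≤ μ) : cappedExcess D μ x = 0 := by
  rw [cappedExcess, max_eq_right (sub_nonpos.2 hx), min_eq_left hD]

lemma cappedExcess_of_add_le (hx : μ + D ≤ x) : cappedExcess D μ x = D :=
  min_eq_right (le_max_of_le_left (by linarith))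

lemma cappedExcess_antitone (D x : ℝ) : Antitone fun μ => cappedExcess D μ x := by
  intro a b hab
  dsimp only [cappedExcess]
  gcongr

lemma le_or_add_le_of_cappedExcess_eq (hD : 0 < D) (hab : a < b)
    (h : cappedExcess D b x = cappedExcess D a x) : x ≤ a ∨ b + D ≤ x := by
  by_contra! hx
  have hlt_cap : cappedExcess D b x < D :=
    min_lt_of_left_lt (max_lt (by linarith) hD)
  have hlt_excess : cappedExcess D b x < x - a :=
    min_lt_of_left_lt (max_lt (by linarith) (by linarith))
  exact (lt_min (lt_max_of_lt_left hlt_excess) hlt_cap).ne h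

variable {ι : Type*} [Fintype ι] {v : ι → ℝ}

lemma exists_sum_cappedExcess_eq {C : ℝ} (hC : 0 ≤ C) (hCD : C ≤ Fintype.card ι * D) :
    ∃ μ, ∑ j, cappedExcess D μ (v j) = C := by
  have hcont : Continuous fun μ => ∑ j, cappedExcess D μ (v j) := by
    unfold cappedExcess
    fun_prop
  obtain ⟨M, hM⟩ := Finite.bddAbove_range v
  obtain ⟨m, hm⟩ := Finite.bddBelow_range v
  have hhigh : ∑ j, cappedExcess D M (v j) ≤ C :=
    (sum_nonpos fun j _ => min_le_of_left_le
      (max_le (sub_nonpos.2 (hM ⟨j, rfl⟩)) le_rfl)).trans hC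
  have hlow : C ≤ ∑ j, cappedExcess D (m - D) (v j) := by
    have hcap : ∀ j, cappedExcess D (m - D) (v j) = D := fun j =>
      cappedExcess_of_add_le (by linarith [hm ⟨j, rfl⟩])
    simpa [hcap] using hCD
  exact mem_range_of_exists_le_of_exists_ge hcont ⟨M, hhigh⟩ ⟨m - D, hlow⟩

lemma le_or_add_le_of_sum_cappedExcess_eq (hD : 0 < D) (hab : a < b)
    (h : ∑ j, cappedExcess D b (v j) = ∑ j, cappedExcess D a (v j)) (j : ι) :
    v j ≤ a ∨ b + D ≤ v j := by
  have hterm := (sum_eq_sum_iff_of_le fun i _ => cappedExcess_antitone D (v i) hab.le).1 h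
  exact le_or_add_le_of_cappedExcess_eq hD hab (hterm j (mem_univ j))

lemma sum_cappedExcess_eq_card_mul (hD : 0 ≤ D) (h : ∀ j, v j ≤ μ ∨ μ + D ≤ v j) :
    ∑ j, cappedExcess D μ (v j) = #{j | μ + D ≤ v j} * D := by
  have hterm (j : ι) : cappedExcess D μ (v j) = if μ + D ≤ v j then D else 0 := by
    split_ifs with hj
    · exact cappedExcess_of_add_le hj
    · exact cappedExcess_of_le hD ((h j).resolve_right hj)
  simp only [hterm, ← sum_filter, sum_const, nsmul_eq_mul]

end CappedExcess

lemma lt_kthLargest_sub_kthLargest_succ_of_sum_eq {n k : ℕ} (hk : 1 ≤ k) (hkn : k < n)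
    {v : Fin n → ℝ} {D a b : ℝ} (hD : 0 < D) (hab : a < b)
    (ha : ∑ j, cappedExcess D a (v j) = k * D)
    (hb : ∑ j, cappedExcess D b (v j) = k * D) :
    D < kthLargest v k - kthLargest v (k + 1) := by
  have hgap := le_or_add_le_of_sum_cappedExcess_eq hD hab (hb.trans ha.symm)
  have hsum := sum_cappedExcess_eq_card_mul hD.le fun j => (hgap j).imp_left fun h => h.trans hab.le
  have hcard : #{j | b + D ≤ v j} = k := by
    exact_mod_cast mul_right_cancel₀ hD.ne' (hsum.symm.trans hb)
  calc D < b + D - a := by linarith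
    _ ≤ _ := sub_le_kthLargest_sub_kthLargest_succ hk hkn hgap hcard

lemma existsUnique_sum_cappedExcess_eq_mul {n k : ℕ} (hk : 1 ≤ k) (hkn : k < n) {v : Fin n → ℝ}
    {D : ℝ} (hD : 0 < D) (hgap : kthLargest v k - kthLargest v (k + 1) < D) :
    ∃! μ, ∑ j, cappedExcess D μ (v j) = k * D := by
  refine existsUnique_of_exists_of_unique (exists_sum_cappedExcess_eq (by positivity) ?_) ?_
  · rw [Fintype.card_fin]
    gcongr
  · have hle : ∀ a b, ∑ j, cappedExcess D a (v j) = k * D →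
        ∑ j, cappedExcess D b (v j) = k * D → b ≤ a := fun a b ha hb =>
      not_lt.1 fun hab => hgap.not_gt <|
        lt_kthLargest_sub_kthLargest_succ_of_sum_eq hk hkn hD hab ha hb
    exact fun a b ha hb => le_antisymm (hle b a hb ha) (hle a b ha hb)

/-- if `C > C₀ = k(β⁰_[k] − β⁰_[k+1])` and `C > 0`, then there is a unique
`μ` with `Σ_j min{[β⁰_j − μ]_+, C/k} = C`. -/
theorem unique_mu_of_C_gt_C0
    (n k : ℕ) (hk1 : 1 ≤ k) (hkn : k < n) (β0 : Fin n → ℝ)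
    (C : ℝ) (hC0 : C > (k : ℝ) * (kthLargest β0 k - kthLargest β0 (k + 1)))
    (hCpos : 0 < C) :
    ∃! μ : ℝ, (∑ j, min (max (β0 j - μ) 0) (C / k)) = C := by
  have hk : (0 : ℝ) < k := by exact_mod_cast hk1
  have hgap : kthLargest β0 k - kthLargest β0 (k + 1) < C / k := (lt_div_iff₀' hk).2 hC0
  simpa only [cappedExcess, mul_div_cancel₀ C hk.ne'] using
    existsUnique_sum_cappedExcess_eq_mul hk1 hkn (div_pos hCpos hk) hgap
end

section
/- Let D = {(x_1, y_1),...,(x_N, y_N)} ⊂ ℝ^p × {−1,+1} be a dataset, let τ ∈ (0,1), λ > 0, let L be a surrogate function of 𝟙(u ≤ 0), and let k be an integer with N − ⌊τN⌋ < k ≤ N. Let A be a natural number satisfying ⌊τ(N + A)⌋ − A = N − k, and set n = N + A and d = p + 1. Construct the single positive instance x^+ = 0 ∈ ℝ^d and the negative instances x_i^- = (−y_i x_i, −y_i) ∈ ℝ^d for i = 1,...,N and x_{N+j}^- = 0 ∈ ℝ^d for j = 1,...,A. Then there exists a hyperplane (w₀, b₀) ∈ ℝ^p × ℝ reaching at least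 k agreements on D (i.e., y_i(⟨w₀, x_i⟩ + b₀) > 0 for at least k indices i) if and only if inf over w ∈ ℝ^d with ‖w‖ ≤ λ of L( ⟨w, x^+⟩ − ⟨w, x^-_{[⌊τn⌋ + 1]}⟩ ) < L(0), where ⟨w, x^-_{[j]}⟩ denotes the j-th largest value among ⟨w, x_1^-⟩,...,⟨w, x_n^-⟩. -/
open scoped RealInnerProductSpace

/-!
Sorting shows that the `(m + 1)`-th largest of `n` scores is negative exactly when at most `m` of
them are nonnegative, i.e. when at least `n - m` are negative. In the constructed dataset the
padding points always score `0`, and under `(w₀, b₀)` the `i`-th remaining point scores the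
negated margin `-y i * (⟪w₀, x i⟫ + b₀)`. Hence for `m + k = N + A` the `(m + 1)`-th largest score
is negative exactly when `(w₀, b₀)` reaches `k` agreements. Since `L u < L 0` holds exactly for
`u > 0`, the infimum drops below `L 0` exactly when some vector of the ball encodes such a
hyperplane, and the ball imposes no restriction because agreements are invariant under positive
rescaling.
-/

lemma apply_lt_iff_le_card_lt_add_of_antitone {α : Type*} [LinearOrder α] {n : ℕ} {f : Fin n → α}
    (hf : Antitone f) (c : α) (m : Fin n) :
    f m < c ↔ n ≤ (Finset.univ.filter fun i => f i < c).card + m := by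
  have hcard := Finset.card_filter_add_card_filter_not (s := Finset.univ) fun i => f i < c
  simp only [not_lt, Finset.card_univ, Fintype.card_fin] at hcard
  rw [← not_le, ← Tuple.lt_card_ge_iff_apply_ge_of_antitone hf]
  omega

lemma exists_antitone_comp_perm_kthLargest {n : ℕ} (v : Fin n → ℝ) :
    ∃ σ : Equiv.Perm (Fin n), Antitone (v ∘ σ) ∧
      ∀ (i : ℕ) (hi : i < n), kthLargest v (i + 1) = v (σ ⟨i, hi⟩) := by
  let σ := Tuple.sort (OrderDual.toDual ∘ v)
  have hσ : Antitone (v ∘ σ) := Tuple.monotone_sort (OrderDual.toDual ∘ v)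
  have hsort : (List.ofFn v).insertionSort (· ≥ ·) = List.ofFn (v ∘ σ) :=
    ((List.perm_insertionSort _ _).trans (σ.ofFn_comp_perm v).symm).eq_of_pairwise'
      (List.pairwise_insertionSort _ _) hσ.sortedGE_ofFn.pairwise
  refine ⟨σ, hσ, fun i hi => ?_⟩
  simp [kthLargest, hsort, hi]

lemma kthLargest_lt_iff {n : ℕ} (v : Fin n → ℝ) (c : ℝ) {m : ℕ} (hm : m < n) :
    kthLargest v (m + 1) < c ↔ n ≤ (Finset.univ.filter fun i => v i < c).card + m := by
  obtain ⟨σ, hσ, hkth⟩ := exists_antitone_comp_perm_kthLargest v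
  have hcard : (Finset.univ.filter fun i => (v ∘ σ) i < c).card =
      (Finset.univ.filter fun i => v i < c).card :=
    Finset.card_bijective σ σ.bijective (by simp)
  rw [hkth m hm, ← hcard]
  exact apply_lt_iff_le_card_lt_add_of_antitone hσ c ⟨m, hm⟩

lemma card_filter_fin_add_eq_of_natAdd_not {N A : ℕ} {P : Fin (N + A) → Prop}
    [DecidablePred P] (hP : ∀ j : Fin A, ¬ P (Fin.natAdd N j)) :
    (Finset.univ.filter P).card =
      (Finset.univ.filter fun i : Fin N => P (Fin.castAdd A i)).card := by
  simp only [Finset.card_filter, Fin.sum_univ_add, hP, if_false, Finset.sum_const_zero, add_zero]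

section Ball

variable {F : Type*} [SeminormedAddCommGroup F] [NormedSpace ℝ F]

lemma exists_pos_norm_smul_le {r : ℝ} (hr : 0 < r) (w : F) : ∃ c : ℝ, 0 < c ∧ ‖c • w‖ ≤ r := by
  refine ⟨r / (‖w‖ + 1), by positivity, ?_⟩
  rw [norm_smul, Real.norm_of_nonneg (by positivity), div_mul_eq_mul_div]
  exact div_le_of_le_mul₀ (by positivity) hr.le (by gcongr; linarith)

lemma sInf_ball_lt_iff_exists_lt {φ : F → ℝ} (hφ : BddBelow (Set.range φ)) {a r : ℝ} (hr : 0 < r)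
    (hscale : ∀ c : ℝ, 0 < c → ∀ w, φ w < a → φ (c • w) < a) :
    sInf {v : ℝ | ∃ w : F, ‖w‖ ≤ r ∧ v = φ w} < a ↔ ∃ w, φ w < a := by
  have hbdd : BddBelow {v : ℝ | ∃ w : F, ‖w‖ ≤ r ∧ v = φ w} :=
    hφ.mono (by rintro _ ⟨w, -, rfl⟩; exact ⟨w, rfl⟩)
  rw [csInf_lt_iff hbdd ⟨φ 0, 0, by simpa using hr.le, rfl⟩]
  constructor
  · rintro ⟨_, ⟨w, -, rfl⟩, hw⟩
    exact ⟨w, hw⟩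
  · rintro ⟨w, hw⟩
    obtain ⟨c, hc, hcw⟩ := exists_pos_norm_smul_le hr w
    exact ⟨_, ⟨c • w, hcw, rfl⟩, hscale c hc w hw⟩

end Ball

section Homogenization

variable {p : ℕ}

/-- The vector `(w, b) ∈ ℝ^{p+1}` with last coordinate `b`. It represents both the hyperplane with
normal `w` and offset `b`, and the instances `(-y x, -y)` on which hyperplanes are scored. -/
def euclideanSnoc (w : EuclideanSpace ℝ (Fin p)) (b : ℝ) : EuclideanSpace ℝ (Fin (p + 1)) :=
  WithLp.toLp 2 (Fin.snoc (fun j => w j) b)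

lemma inner_euclideanSnoc (w z : EuclideanSpace ℝ (Fin p)) (b c : ℝ) :
    ⟪euclideanSnoc w b, euclideanSnoc z c⟫ = ⟪w, z⟫ + b * c := by
  simp [euclideanSnoc, PiLp.inner_apply, Fin.sum_univ_castSucc, mul_comm]

lemma exists_euclideanSnoc {P : EuclideanSpace ℝ (Fin (p + 1)) → Prop} :
    (∃ w, P w) ↔ ∃ w₀ b₀, P (euclideanSnoc w₀ b₀) := by
  refine ⟨fun ⟨w, hw⟩ => ?_, fun ⟨w₀, b₀, h⟩ => ⟨_, h⟩⟩
  have hsnoc : euclideanSnoc (WithLp.toLp 2 (Fin.init w.ofLp)) (w (Fin.last p)) = w :=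
    congrArg (WithLp.toLp 2) (Fin.snoc_init_self w.ofLp)
  exact ⟨_, _, hsnoc.symm ▸ hw⟩

lemma inner_euclideanSnoc_neg_iff_agreement (w x : EuclideanSpace ℝ (Fin p)) (b y : ℝ) :
    ⟪euclideanSnoc w b, euclideanSnoc (-y • x) (-y)⟫ < 0 ↔ 0 < y * (⟪w, x⟫ + b) := by
  have hmargin : ⟪euclideanSnoc w b, euclideanSnoc (-y • x) (-y)⟫ = -(y * (⟪w, x⟫ + b)) := by
    rw [inner_euclideanSnoc, real_inner_smul_right]
    ring
  rw [hmargin, neg_lt_zero]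

lemma card_inner_neg_eq_card_agreements {N A : ℕ} {x : Fin N → EuclideanSpace ℝ (Fin p)}
    {y : Fin N → ℝ} {xneg : Fin (N + A) → EuclideanSpace ℝ (Fin (p + 1))}
    (hdata : ∀ i, xneg (Fin.castAdd A i) = euclideanSnoc (-y i • x i) (-y i))
    (hpad : ∀ j, xneg (Fin.natAdd N j) = 0) (w₀ : EuclideanSpace ℝ (Fin p)) (b₀ : ℝ) :
    (Finset.univ.filter fun j => ⟪euclideanSnoc w₀ b₀, xneg j⟫ < 0).card =
      (Finset.univ.filter fun i => 0 < y i * (⟪w₀, x i⟫ + b₀)).card := by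
  rw [card_filter_fin_add_eq_of_natAdd_not (by simp [hpad])]
  simp only [hdata, inner_euclideanSnoc_neg_iff_agreement]

end Homogenization

lemma floor_mul_natCast_le_of_le_one {R : Type*} [Ring R] [LinearOrder R] [IsStrictOrderedRing R]
    [FloorRing R] {τ : R} (hτ : τ ≤ 1) (N : ℕ) : ⌊τ * (N : R)⌋ ≤ (N : ℤ) := by
  simpa using Int.floor_le_floor (mul_le_of_le_one_left N.cast_nonneg hτ)

open Classical in
theorem dpmap_reduction_case1_general {N p A k m : ℕ} (x : Fin N → EuclideanSpace ℝ (Fin p))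
    (y : Fin N → ℝ) {r : ℝ} (hr : 0 < r) {L : ℝ → ℝ} (hL_bdd : BddBelow (Set.range L))
    (hL_nonpos : ∀ u ≤ 0, L 0 ≤ L u) (hL_pos : ∀ u > 0, L u < L 0)
    (hk : 0 < k) (hm : m + k = N + A)
    (xneg : Fin (N + A) → EuclideanSpace ℝ (Fin (p + 1)))
    (hxneg : ∀ i : Fin (N + A), xneg i =
      if h : (i : ℕ) < N then
        (Fin.snoc (fun j : Fin p => -(y ⟨i, h⟩) * x ⟨i, h⟩ j) (-(y ⟨i, h⟩)) :
          Fin (p + 1) → ℝ)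
      else 0) :
    (∃ (w₀ : EuclideanSpace ℝ (Fin p)) (b₀ : ℝ),
        k ≤ (Finset.univ.filter fun i : Fin N => 0 < y i * (⟪w₀, x i⟫ + b₀)).card) ↔
      sInf {v : ℝ | ∃ w : EuclideanSpace ℝ (Fin (p + 1)), ‖w‖ ≤ r ∧
          v = L (⟪w, (0 : EuclideanSpace ℝ (Fin (p + 1)))⟫ -
            kthLargest (fun j => ⟪w, xneg j⟫) (m + 1))} < L 0 := by
  have hdata : ∀ i, xneg (Fin.castAdd A i) = euclideanSnoc (-y i • x i) (-y i) := fun i => by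
    ext l
    simp [hxneg, euclideanSnoc]
  have hpad : ∀ j, xneg (Fin.natAdd N j) = 0 := fun j => by
    ext l
    simp [hxneg]
  have hL : ∀ u, L u < L 0 ↔ 0 < u := fun u =>
    ⟨fun h => not_le.1 fun hu => (hL_nonpos u hu).not_gt h, hL_pos u⟩
  have hobjective : ∀ w, L (⟪w, (0 : EuclideanSpace ℝ (Fin (p + 1)))⟫ -
      kthLargest (fun j => ⟪w, xneg j⟫) (m + 1)) < L 0 ↔
        k ≤ (Finset.univ.filter fun j => ⟪w, xneg j⟫ < 0).card := fun w => by
    rw [hL, inner_zero_right, zero_sub, neg_pos, kthLargest_lt_iff _ 0 (by omega)]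
    omega
  have hscale : ∀ c : ℝ, 0 < c → ∀ w j, ⟪c • w, xneg j⟫ < 0 ↔ ⟪w, xneg j⟫ < 0 :=
    fun c hc w j => by rw [real_inner_smul_left, ← smul_eq_mul, smul_neg_iff_of_pos_left hc]
  refine Iff.trans ?_ (sInf_ball_lt_iff_exists_lt
    (hL_bdd.mono (Set.range_subset_iff.2 fun _ => Set.mem_range_self _)) hr
    fun c hc w hw => by simpa only [hobjective, hscale c hc] using hw).symm
  simp only [hobjective, exists_euclideanSnoc, card_inner_neg_eq_card_agreements hdata hpad]

open Classical in
/-- Case 1 reduction: with the constructed dataset (one positive instance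
`x⁺ = 0 ∈ ℝ^{p+1}`, negatives `x_i⁻ = (−y_i x_i, −y_i)` for `i ≤ N` and `x_{N+j}⁻ = 0`),
there is a hyperplane reaching at least `k` agreements on `D` iff the infimum of the
surrogate ranking objective over `‖w‖ ≤ λ` is below `L(0)`. -/
theorem dpmap_reduction_case1
    (N p : ℕ) (x : Fin N → EuclideanSpace ℝ (Fin p)) (y : Fin N → ℝ)
    (hy : ∀ i, y i = 1 ∨ y i = -1)
    (τ lam : ℝ) (hτ0 : 0 < τ) (hτ1 : τ < 1) (hlam : 0 < lam)
    (L : ℝ → ℝ) (hL_cont : Continuous L) (hL_anti : Antitone L)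
    (hL_nonpos : ∀ u ≤ 0, L 0 ≤ L u) (hL0 : 1 ≤ L 0)
    (hL_pos : ∀ u > 0, 0 ≤ L u ∧ L u < L 0)
    (hL_lim : Filter.Tendsto L Filter.atTop (nhds 0))
    (k : ℕ) (hk1 : (N : ℤ) - ⌊τ * (N : ℝ)⌋ < (k : ℤ)) (hk2 : k ≤ N)
    (A : ℕ) (hA : ⌊τ * ((N : ℝ) + (A : ℝ))⌋ - (A : ℤ) = (N : ℤ) - (k : ℤ))
    (xneg : Fin (N + A) → EuclideanSpace ℝ (Fin (p + 1)))
    (hxneg : ∀ i : Fin (N + A), xneg i =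
      if h : (i : ℕ) < N then
        (Fin.snoc (fun j : Fin p => -(y ⟨i, h⟩) * x ⟨i, h⟩ j) (-(y ⟨i, h⟩)) :
          Fin (p + 1) → ℝ)
      else 0) :
    (∃ (w₀ : EuclideanSpace ℝ (Fin p)) (b₀ : ℝ),
        k ≤ (Finset.univ.filter fun i : Fin N => 0 < y i * (⟪w₀, x i⟫ + b₀)).card) ↔
      sInf {v : ℝ | ∃ w : EuclideanSpace ℝ (Fin (p + 1)), ‖w‖ ≤ lam ∧
          v = L (⟪w, (0 : EuclideanSpace ℝ (Fin (p + 1)))⟫ -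
            kthLargest (fun j => ⟪w, xneg j⟫)
              ((⌊τ * (((N : ℝ) + (A : ℝ)))⌋).toNat + 1))} < L 0 := by
  have hfloor := floor_mul_natCast_le_of_le_one hτ1.le N
  exact dpmap_reduction_case1_general x y hlam
    ⟨0, Set.forall_mem_range.2 (hL_anti.le_of_tendsto hL_lim)⟩ hL_nonpos
    (fun u hu => (hL_pos u hu).2) (by omega) (by omega) xneg hxneg
end
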